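/- If r is a reification from H to H' and L ⊆ SP(Σ), then r(cl_H(L)) ⊆ cl_{H'}(r(L)). -/

import Mathlib

namespace CKAH

open Classical

/-! ### Labelled posets and pomsets -/

/-- A labelled poset over alphabet `A`: a finite carrier with a partial order and labelling. -/
structure LPoset (A : Type) : Type 1 where
  carrier : Type
  [fin : Fintype carrier]
  [ord : PartialOrder carrier]
  lab : carrier → A

attribute [instance] LPoset.fin LPoset.ord

/-- Isomorphism of labelled posets: an order isomorphism preserving labels. -/
def LPoset.Iso {A : Type} (u v : LPoset A) : Prop :=
  ∃ e : u.carrier ≃o v.carrier, ∀ x, v.lab (e x) = u.lab x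

theorem LPoset.iso_equivalence (A : Type) : Equivalence (LPoset.Iso (A := A)) where
  refl u := ⟨OrderIso.refl _, fun _ => rfl⟩
  symm := by
    rintro u v ⟨e, he⟩
    exact ⟨e.symm, fun x => by rw [← he (e.symm x), OrderIso.apply_symm_apply]⟩
  trans := by
    rintro u v w ⟨e, he⟩ ⟨f, hf⟩
    exact ⟨e.trans f, fun x => by rw [OrderIso.trans_apply, hf, he]⟩

instance pomSetoid (A : Type) : Setoid (LPoset A) := ⟨LPoset.Iso, LPoset.iso_equivalence A⟩

/-- A pomset is an isomorphism class of labelled posets. -/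
def Pomset (A : Type) : Type 1 := Quotient (pomSetoid A)

/-- Sequential composition of labelled posets: disjoint union, everything on the left
below everything on the right (lexicographic sum order). -/
def LPoset.seqL {A : Type} (u v : LPoset A) : LPoset A where
  carrier := u.carrier ⊕ₗ v.carrier
  fin := inferInstanceAs (Fintype (u.carrier ⊕ v.carrier))
  lab := fun x => Sum.elim u.lab v.lab (ofLex x)

/-- Parallel composition of labelled posets: disjoint union with no cross ordering. -/
def LPoset.parL {A : Type} (u v : LPoset A) : LPoset A where
  carrier := u.carrier ⊕ v.carrier
  lab := Sum.elim u.lab v.lab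

def Pomset.seq {A : Type} : Pomset A → Pomset A → Pomset A :=
  Quotient.map₂ LPoset.seqL (by
    rintro u₁ u₂ ⟨e, he⟩ v₁ v₂ ⟨f, hf⟩
    refine ⟨(RelIso.sumLexCongr e f :
      (u₁.carrier ⊕ₗ v₁.carrier) ≃o (u₂.carrier ⊕ₗ v₂.carrier)), ?_⟩
    rintro (x | x)
    · exact he x
    · exact hf x)

/-- Order isomorphism between disjoint-union orders, from component isomorphisms. -/
def sumOrderIso {α β γ δ : Type} [PartialOrder α] [PartialOrder β] [PartialOrder γ]
    [PartialOrder δ] (e : α ≃o γ) (f : β ≃o δ) : (α ⊕ β) ≃o (γ ⊕ δ) where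
  toEquiv := Equiv.sumCongr e.toEquiv f.toEquiv
  map_rel_iff' := by
    rintro (x | x) (y | y) <;> simp [Sum.le_def, e.le_iff_le, f.le_iff_le]

def Pomset.par {A : Type} : Pomset A → Pomset A → Pomset A :=
  Quotient.map₂ LPoset.parL (by
    rintro u₁ u₂ ⟨e, he⟩ v₁ v₂ ⟨f, hf⟩
    refine ⟨sumOrderIso e f, ?_⟩
    rintro (x | x)
    · exact he x
    · exact hf x)

def LPoset.emptyL (A : Type) : LPoset A := { carrier := Fin 0, lab := fun x => x.elim0 }

def LPoset.singleL {A : Type} (a : A) : LPoset A := { carrier := PUnit, lab := fun _ => a }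

/-- The empty pomset `1`. -/
def Pomset.empty (A : Type) : Pomset A := ⟦LPoset.emptyL A⟧

/-- The single-letter pomset. -/
def Pomset.single {A : Type} (a : A) : Pomset A := ⟦LPoset.singleL a⟧

/-- Subsumption on labelled posets: `u ⊑ v` iff there is a label-preserving
order-preserving bijection from the carrier of `v` to that of `u`. -/
def LPoset.subL {A : Type} (u v : LPoset A) : Prop :=
  ∃ h : v.carrier ≃ u.carrier,
    (∀ x, u.lab (h x) = v.lab x) ∧ ∀ x y : v.carrier, x ≤ y → h x ≤ h y

/-- Subsumption of pomsets: `Pomset.sub U V` means `U ⊑ V`. -/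
def Pomset.sub {A : Type} : Pomset A → Pomset A → Prop :=
  Quotient.lift₂ LPoset.subL (by
    rintro u₁ v₁ u₂ v₂ ⟨e, he⟩ ⟨f, hf⟩
    refine propext ⟨?_, ?_⟩
    · rintro ⟨h, hl, hm⟩
      refine ⟨(f.toEquiv.symm.trans h).trans e.toEquiv, fun x => ?_, fun x y hxy => ?_⟩
      · show u₂.lab (e (h (f.symm x))) = v₂.lab x
        rw [he, hl, ← hf (f.symm x), OrderIso.apply_symm_apply]
      · simp only [Equiv.trans_apply]
        exact e.le_iff_le.mpr (hm _ _ (f.symm.le_iff_le.mpr hxy))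
    · rintro ⟨h, hl, hm⟩
      refine ⟨(f.toEquiv.trans h).trans e.toEquiv.symm, fun x => ?_, fun x y hxy => ?_⟩
      · show u₁.lab (e.symm (h (f x))) = v₁.lab x
        rw [← he (e.symm (h (f x))), OrderIso.apply_symm_apply, hl, hf]
      · simp only [Equiv.trans_apply]
        exact e.symm.le_iff_le.mpr (hm _ _ (f.le_iff_le.mpr hxy)))

def LPoset.isWordL {A : Type} (u : LPoset A) : Prop := ∀ x y : u.carrier, x ≤ y ∨ y ≤ x

/-- A pomset is a word when it is totally ordered. -/
def Pomset.IsWord {A : Type} : Pomset A → Prop :=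
  Quotient.lift LPoset.isWordL (by
    rintro u v ⟨e, -⟩
    refine propext ⟨fun h x y => ?_, fun h x y => ?_⟩
    · rcases h (e.symm x) (e.symm y) with h' | h'
      · exact Or.inl (e.symm.le_iff_le.mp h')
      · exact Or.inr (e.symm.le_iff_le.mp h')
    · rcases h (e x) (e y) with h' | h'
      · exact Or.inl (e.le_iff_le.mp h')
      · exact Or.inr (e.le_iff_le.mp h'))

def LPoset.mapL {A B : Type} (f : A → B) (u : LPoset A) : LPoset B :=
  { carrier := u.carrier, lab := f ∘ u.lab }

/-- Relabelling of pomsets along a function on letters. -/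
def Pomset.map {A B : Type} (f : A → B) : Pomset A → Pomset B :=
  Quotient.map (LPoset.mapL f)
    (by rintro u v ⟨e, he⟩; exact ⟨e, fun x => congrArg f (he x)⟩)

def LPoset.overL {A : Type} (Γ : Set A) (u : LPoset A) : Prop := ∀ x, u.lab x ∈ Γ

/-- All labels of the pomset belong to `Γ`. -/
def Pomset.Over {A : Type} (Γ : Set A) : Pomset A → Prop :=
  Quotient.lift (LPoset.overL Γ) (by
    rintro u v ⟨e, he⟩
    refine propext ⟨fun h x => ?_, fun h x => ?_⟩
    · have h2 := he (e.symm x)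
      rw [OrderIso.apply_symm_apply] at h2
      rw [h2]; exact h _
    · rw [← he x]; exact h _)

/-- Series-parallel pomsets. -/
inductive Pomset.IsSP {A : Type} : Pomset A → Prop
  | empty : Pomset.IsSP (Pomset.empty A)
  | single (a : A) : Pomset.IsSP (Pomset.single a)
  | seq {U V : Pomset A} : Pomset.IsSP U → Pomset.IsSP V → Pomset.IsSP (Pomset.seq U V)
  | par {U V : Pomset A} : Pomset.IsSP U → Pomset.IsSP V → Pomset.IsSP (Pomset.par U V)

def SPset (A : Type) : Set (Pomset A) := {U | U.IsSP}

/-! ### Pomset contexts -/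

/-- Contexts are pomsets over `Option A`, where `none` plays the role of `*`.
`uniqueStarL` says there is exactly one `*`-labelled node. -/
def LPoset.uniqueStarL {A : Type} (c : LPoset (Option A)) : Prop := ∃! x, c.lab x = none

theorem LPoset.uniqueStarL_congr {A : Type} {u v : LPoset (Option A)}
    (e : u.carrier ≃o v.carrier) (he : ∀ x, v.lab (e x) = u.lab x) :
    u.uniqueStarL ↔ v.uniqueStarL := by
  constructor
  · rintro ⟨x, hx, hux⟩
    refine ⟨e x, show v.lab (e x) = none by rw [he]; exact hx, fun y hy => ?_⟩
    have h2 := he (e.symm y)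
    rw [OrderIso.apply_symm_apply] at h2
    have h3 : e.symm y = x := hux _ (h2.symm.trans hy)
    rw [← h3, OrderIso.apply_symm_apply]
  · rintro ⟨x, hx, hvx⟩
    refine ⟨e.symm x, ?_, fun y hy => ?_⟩
    · show u.lab (e.symm x) = none
      have h2 := he (e.symm x)
      rw [OrderIso.apply_symm_apply] at h2
      rw [← h2]; exact hx
    · have h3 : e y = x := hvx _ (show v.lab (e y) = none by rw [he]; exact hy)
      rw [← h3, OrderIso.symm_apply_apply]

/-- A pomset context: exactly one node labelled `*`. -/
def Pomset.IsCtx {A : Type} : Pomset (Option A) → Prop :=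
  Quotient.lift LPoset.uniqueStarL
    (fun _ _ h => propext (LPoset.uniqueStarL_congr h.choose h.choose_spec))

/-- Series-parallel pomset contexts. -/
def Pomset.IsSPCtx {A : Type} (C : Pomset (Option A)) : Prop := C.IsCtx ∧ C.IsSP

/-- Sequential (totally ordered) pomset contexts. -/
def Pomset.IsSeqCtx {A : Type} (C : Pomset (Option A)) : Prop := C.IsCtx ∧ C.IsWord

/-- The trivial context `*`. -/
def starCtx (A : Type) : Pomset (Option A) := Pomset.single (none : Option A)

theorem option_get_eq_get {α : Type} {o₁ o₂ : Option α} (h : o₁ = o₂) (h₁ : o₁.isSome)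
    (h₂ : o₂.isSome) : o₁.get h₁ = o₂.get h₂ := by subst h; rfl

/-- The order of `C[U]`: the orders of `C` (restricted away from `*`) and of `U`, with a
point of `C` below (resp. above) all of `U` when it is below (resp. above) the unique
`*`-node of `C`.  (For well-definedness of the order, the cross-relations are guarded by
the requirement that the star node is unique, which holds for every genuine context.) -/
def LPoset.insLe {A : Type} (c : LPoset (Option A)) (u : LPoset A) :
    ({x : c.carrier // c.lab x ≠ none} ⊕ u.carrier) →
    ({x : c.carrier // c.lab x ≠ none} ⊕ u.carrier) → Prop
  | Sum.inl x, Sum.inl y => x.val ≤ y.val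
  | Sum.inr x, Sum.inr y => x ≤ y
  | Sum.inl x, Sum.inr _ => c.uniqueStarL ∧ ∃ s, c.lab s = none ∧ x.val ≤ s
  | Sum.inr _, Sum.inl y => c.uniqueStarL ∧ ∃ s, c.lab s = none ∧ s ≤ y.val

/-- Insertion of a labelled poset `u` into the gap of a context `c`: the `*`-labelled
node is removed and `u` is put in its place, inheriting the order relations of `*`. -/
noncomputable def LPoset.insL {A : Type} (c : LPoset (Option A)) (u : LPoset A) :
    LPoset A where
  carrier := {x : c.carrier // c.lab x ≠ none} ⊕ u.carrier
  fin := by classical exact inferInstance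
  ord :=
    { le := LPoset.insLe c u
      lt := fun p q => LPoset.insLe c u p q ∧ ¬ LPoset.insLe c u q p
      lt_iff_le_not_ge := fun _ _ => Iff.rfl
      le_refl := by rintro (x | x) <;> exact le_refl _
      le_trans := by
        rintro (x | x) (y | y) (z | z) h1 h2
        · exact le_trans h1 h2
        · obtain ⟨hu, s, hs, hys⟩ := h2
          exact ⟨hu, s, hs, le_trans h1 hys⟩
        · obtain ⟨hu, s, hs, hxs⟩ := h1
          obtain ⟨-, t, ht, htz⟩ := h2
          obtain ⟨w, hw, huniq⟩ := hu
          have hst : s = t := (huniq s hs).trans (huniq t ht).symm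
          exact le_trans (hst ▸ hxs) htz
        · exact h1
        · obtain ⟨hu, s, hs, hsy⟩ := h1
          exact ⟨hu, s, hs, le_trans hsy h2⟩
        · obtain ⟨hu, s, hs, hsy⟩ := h1
          obtain ⟨-, t, ht, hyt⟩ := h2
          obtain ⟨w, hw, huniq⟩ := hu
          have hst : s = t := (huniq s hs).trans (huniq t ht).symm
          have hy : y.val = s := le_antisymm (hst.symm ▸ hyt) hsy
          exact absurd (hy.symm ▸ hs) y.prop
        · exact h2
        · exact le_trans h1 h2
      le_antisymm := by
        rintro (x | x) (y | y) h1 h2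
        · exact congrArg Sum.inl (Subtype.ext (le_antisymm h1 h2))
        · obtain ⟨hu, s, hs, hxs⟩ := h1
          obtain ⟨-, t, ht, htx⟩ := h2
          obtain ⟨w, hw, huniq⟩ := hu
          have hst : s = t := (huniq s hs).trans (huniq t ht).symm
          have hx : x.val = s := le_antisymm hxs (hst.symm ▸ htx)
          exact absurd (hx.symm ▸ hs) x.prop
        · obtain ⟨hu, s, hs, hsy⟩ := h1
          obtain ⟨-, t, ht, hyt⟩ := h2
          obtain ⟨w, hw, huniq⟩ := hu
          have hst : s = t := (huniq s hs).trans (huniq t ht).symm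
          have hy : y.val = s := le_antisymm (hst.symm ▸ hyt) hsy
          exact absurd (hy.symm ▸ hs) y.prop
        · exact congrArg Sum.inr (le_antisymm h1 h2) }
  lab := Sum.elim (fun x => (c.lab x.val).get (Option.isSome_iff_ne_none.mpr x.prop)) u.lab

/-- `Pomset.ins C U` is `C[U]`: plugging the pomset `U` into the gap of the context `C`. -/
noncomputable def Pomset.ins {A : Type} : Pomset (Option A) → Pomset A → Pomset A :=
  Quotient.map₂ LPoset.insL (by
    rintro c₁ c₂ ⟨e, he⟩ u₁ u₂ ⟨f, hf⟩
    have hstar : c₁.uniqueStarL ↔ c₂.uniqueStarL := LPoset.uniqueStarL_congr e he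
    refine ⟨{ toEquiv := Equiv.sumCongr
                (e.toEquiv.subtypeEquiv fun x => by
                  rw [show c₂.lab (e.toEquiv x) = c₁.lab x from he x]) f.toEquiv
              map_rel_iff' := ?_ }, ?_⟩
    · rintro (x | x) (y | y)
      · exact e.le_iff_le
      · show (c₂.uniqueStarL ∧ ∃ s, c₂.lab s = none ∧ (e x.val : c₂.carrier) ≤ s) ↔
             (c₁.uniqueStarL ∧ ∃ s, c₁.lab s = none ∧ x.val ≤ s)
        constructor
        · rintro ⟨hu, s, hs, hxs⟩
          refine ⟨hstar.mpr hu, e.symm s, ?_, ?_⟩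
          · have h2 := he (e.symm s)
            rw [OrderIso.apply_symm_apply] at h2
            rw [← h2]; exact hs
          · exact e.le_iff_le.mp (by rw [OrderIso.apply_symm_apply]; exact hxs)
        · rintro ⟨hu, s, hs, hxs⟩
          exact ⟨hstar.mp hu, e s, by rw [he]; exact hs, e.le_iff_le.mpr hxs⟩
      · show (c₂.uniqueStarL ∧ ∃ s, c₂.lab s = none ∧ s ≤ (e y.val : c₂.carrier)) ↔
             (c₁.uniqueStarL ∧ ∃ s, c₁.lab s = none ∧ s ≤ y.val)
        constructor
        · rintro ⟨hu, s, hs, hsy⟩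
          refine ⟨hstar.mpr hu, e.symm s, ?_, ?_⟩
          · have h2 := he (e.symm s)
            rw [OrderIso.apply_symm_apply] at h2
            rw [← h2]; exact hs
          · exact e.le_iff_le.mp (by rw [OrderIso.apply_symm_apply]; exact hsy)
        · rintro ⟨hu, s, hs, hsy⟩
          exact ⟨hstar.mp hu, e s, by rw [he]; exact hs, e.le_iff_le.mpr hsy⟩
      · exact f.le_iff_le
    · rintro (x | x)
      · exact option_get_eq_get (he x.val) _ _
      · exact hf x)

/-! ### Pomset languages -/

abbrev Lang (A : Type) := Set (Pomset A)

def Lang.seq {A : Type} (L K : Lang A) : Lang A :=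
  {W | ∃ U ∈ L, ∃ V ∈ K, W = Pomset.seq U V}

def Lang.par {A : Type} (L K : Lang A) : Lang A :=
  {W | ∃ U ∈ L, ∃ V ∈ K, W = Pomset.par U V}

def Lang.pow {A : Type} (L : Lang A) : ℕ → Lang A
  | 0 => {Pomset.empty A}
  | n + 1 => Lang.seq (Lang.pow L n) L

def Lang.star {A : Type} (L : Lang A) : Lang A := ⋃ n, L.pow n

/-- Application of a context to a language: `C[L] = {C[U] : U ∈ L}`. -/
def Ctx.img {A : Type} (C : Pomset (Option A)) (L : Lang A) : Lang A :=
  {W | ∃ U ∈ L, W = C.ins U}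

/-! ### CKA terms and semantics -/

inductive Term (A : Type) : Type
  | zero : Term A
  | one : Term A
  | var : A → Term A
  | add : Term A → Term A → Term A
  | seq : Term A → Term A → Term A
  | par : Term A → Term A → Term A
  | star : Term A → Term A

/-- Pomset language semantics of CKA terms. -/
def Term.lang {A : Type} : Term A → Lang A
  | .zero => ∅
  | .one => {Pomset.empty A}
  | .var a => {Pomset.single a}
  | .add e f => e.lang ∪ f.lang
  | .seq e f => Lang.seq e.lang f.lang
  | .par e f => Lang.par e.lang f.lang
  | .star e => Lang.star e.lang

/-- Sets of hypotheses: a hypothesis `e ≤ f` is the pair `(e, f)`. -/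
abbrev HypSet (A : Type) := Set (Term A × Term A)

/-- The congruence `≡^H` on CKA terms generated by the CKA axioms and the hypotheses `H`
(the constructor `hyp` encodes `e ≦^H f`, i.e. `e + f ≡^H f`, for `e ≤ f ∈ H`). -/
inductive CongH {A : Type} (H : HypSet A) : Term A → Term A → Prop
  | refl (e) : CongH H e e
  | symm {e f} : CongH H e f → CongH H f e
  | trans {e f g} : CongH H e f → CongH H f g → CongH H e g
  | addCong {e e' f f'} : CongH H e e' → CongH H f f' → CongH H (.add e f) (.add e' f')
  | seqCong {e e' f f'} : CongH H e e' → CongH H f f' → CongH H (.seq e f) (.seq e' f')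
  | parCong {e e' f f'} : CongH H e e' → CongH H f f' → CongH H (.par e f) (.par e' f')
  | starCong {e e'} : CongH H e e' → CongH H (.star e) (.star e')
  | addZero (e) : CongH H (.add e .zero) e
  | addIdem (e) : CongH H (.add e e) e
  | addComm (e f) : CongH H (.add e f) (.add f e)
  | addAssoc (e f g) : CongH H (.add e (.add f g)) (.add (.add e f) g)
  | seqAssoc (e f g) : CongH H (.seq e (.seq f g)) (.seq (.seq e f) g)
  | seqDistL (e f g) : CongH H (.seq e (.add f g)) (.add (.seq e f) (.seq e g))
  | seqDistR (e f g) : CongH H (.seq (.add e f) g) (.add (.seq e g) (.seq f g))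
  | seqOneR (e) : CongH H (.seq e .one) e
  | seqOneL (e) : CongH H (.seq .one e) e
  | seqZeroR (e) : CongH H (.seq e .zero) .zero
  | seqZeroL (e) : CongH H (.seq .zero e) .zero
  | parComm (e f) : CongH H (.par e f) (.par f e)
  | parOne (e) : CongH H (.par e .one) e
  | parZero (e) : CongH H (.par e .zero) .zero
  | parAssoc (e f g) : CongH H (.par e (.par f g)) (.par (.par e f) g)
  | parDist (e f g) : CongH H (.par e (.add f g)) (.add (.par e f) (.par e g))
  | starUnfoldL (e) : CongH H (.add .one (.seq e (.star e))) (.star e)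
  | starUnfoldR (e) : CongH H (.add .one (.seq (.star e) e)) (.star e)
  | lfpL {e f g} : CongH H (.add (.add e (.seq f g)) g) g →
      CongH H (.add (.seq (.star f) e) g) g
  | lfpR {e f g} : CongH H (.add (.add e (.seq f g)) f) f →
      CongH H (.add (.seq e (.star g)) f) f
  | hyp {e f} : (e, f) ∈ H → CongH H (.add e f) f

/-- `e ≦^H f`, the natural order `e + f ≡^H f`. -/
def LeH {A : Type} (H : HypSet A) (e f : Term A) : Prop := CongH H (.add e f) f

/-- The `H`-closure of a pomset language, as an inductive predicate: the smallest language
containing `L` such that for all `e ≤ f ∈ H` and series-parallel contexts `C`,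
if `C[⟦f⟧] ⊆ cl` then `C[⟦e⟧] ⊆ cl`. -/
inductive closure {A : Type} (H : HypSet A) (L : Lang A) : Pomset A → Prop
  | base {U} : U ∈ L → closure H L U
  | step {e f : Term A} (hef : (e, f) ∈ H) {C : Pomset (Option A)} (hC : C.IsSPCtx)
      (hf : ∀ V ∈ f.lang, closure H L (C.ins V)) {U} (hU : U ∈ e.lang) :
      closure H L (C.ins U)

/-- `cl H L` is the `H`-closure of `L`. -/
def cl {A : Type} (H : HypSet A) (L : Lang A) : Lang A := {U | closure H L U}

/-- The sequential closure: like `cl` but only sequential contexts are used. -/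
inductive seqClosure {A : Type} (H : HypSet A) (L : Lang A) : Pomset A → Prop
  | base {U} : U ∈ L → seqClosure H L U
  | step {e f : Term A} (hef : (e, f) ∈ H) {C : Pomset (Option A)} (hC : C.IsSeqCtx)
      (hf : ∀ V ∈ f.lang, seqClosure H L (C.ins V)) {U} (hU : U ∈ e.lang) :
      seqClosure H L (C.ins U)

def seqCl {A : Type} (H : HypSet A) (L : Lang A) : Lang A := {U | seqClosure H L U}

/-! ### Implication, completeness, reductions -/

/-- `H` implies `H'`: every hypothesis of `H'` is derivable from `H`. -/
def Implies {A : Type} (H H' : HypSet A) : Prop := ∀ p ∈ H', LeH H p.1 p.2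

/-- `H` is complete: semantic equivalence implies axiomatic equivalence. -/
def Complete {A : Type} (H : HypSet A) : Prop :=
  ∀ e f : Term A, cl H e.lang = cl H f.lang → CongH H e f

/-- A reduction from `H` to `H'` (presupposing that `H` implies `H'`). -/
structure IsReduction {A : Type} (H H' : HypSet A) (r : Term A → Term A) : Prop where
  implies : Implies H H'
  equiv : ∀ e, CongH H e (r e)
  reflect : ∀ e f : Term A, cl H e.lang = cl H f.lang → cl H' (r e).lang = cl H' (r f).lang

def Reduces {A : Type} (H H' : HypSet A) : Prop := ∃ r, IsReduction H H' r

/-- A strong reduction from `H` to `H'`. -/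
structure IsStrongReduction {A : Type} (H H' : HypSet A) (r : Term A → Term A)
    extends IsReduction H H' r : Prop where
  strong : ∀ e : Term A, cl H e.lang = cl H' (r e).lang

def StronglyReduces {A : Type} (H H' : HypSet A) : Prop := ∃ r, IsStrongReduction H H' r

/-- `H` factorises into `H₀` and `H₁`. -/
def Factorises {A : Type} (H H₀ H₁ : HypSet A) : Prop :=
  Implies H H₀ ∧ Implies H H₁ ∧ ∀ L : Lang A, L ⊆ SPset A → cl H L = cl H₁ (cl H₀ L)

/-! ### The exchange hypotheses and sp-subsumption -/

/-- The exchange hypotheses `(e∥f)·(g∥h) ≤ (e·g)∥(f·h)`. -/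
def exch (A : Type) : HypSet A :=
  {p | ∃ e f g h : Term A,
    p = (Term.seq (.par e f) (.par g h), Term.par (.seq e g) (.seq f h))}

/-- `⊑^sp`: the smallest precongruence on series-parallel pomsets satisfying the
exchange inequality. -/
inductive spSub {A : Type} : Pomset A → Pomset A → Prop
  | refl {U : Pomset A} : U.IsSP → spSub U U
  | trans {U V W} : spSub U V → spSub V W → spSub U W
  | seqCong {U V U' V'} : spSub U V → spSub U' V' → spSub (Pomset.seq U U') (Pomset.seq V V')
  | parCong {U V U' V'} : spSub U V → spSub U' V' → spSub (Pomset.par U U') (Pomset.par V V')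
  | exch {U V W X : Pomset A} : U.IsSP → V.IsSP → W.IsSP → X.IsSP →
      spSub (Pomset.seq (Pomset.par U V) (Pomset.par W X))
            (Pomset.par (Pomset.seq U W) (Pomset.seq V X))

/-! ### KA terms, grounded hypotheses, sequential reductions -/

/-- A term is a KA term when it contains no `∥`. -/
def Term.noPar {A : Type} : Term A → Prop
  | .zero => True
  | .one => True
  | .var _ => True
  | .add e f => e.noPar ∧ f.noPar
  | .seq e f => e.noPar ∧ f.noPar
  | .par _ _ => False
  | .star e => e.noPar

/-- A non-empty word. -/
def IsNonemptyWord {A : Type} (W : Pomset A) : Prop := W.IsWord ∧ W ≠ Pomset.empty A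

/-- A set of hypotheses is grounded when in each hypothesis `e ≤ f`, `e` is a KA term and
`⟦f⟧ = {W}` for a non-empty word `W`. -/
def Grounded {A : Type} (H : HypSet A) : Prop :=
  ∀ p ∈ H, p.1.noPar ∧ ∃ W : Pomset A, IsNonemptyWord W ∧ p.2.lang = {W}

/-- `≡_KA^H`: the congruence on terms generated by the axioms of `≡` not involving `∥`
together with the hypotheses of `H`. -/
inductive KACong {A : Type} (H : HypSet A) : Term A → Term A → Prop
  | refl (e) : KACong H e e
  | symm {e f} : KACong H e f → KACong H f e
  | trans {e f g} : KACong H e f → KACong H f g → KACong H e g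
  | addCong {e e' f f'} : KACong H e e' → KACong H f f' → KACong H (.add e f) (.add e' f')
  | seqCong {e e' f f'} : KACong H e e' → KACong H f f' → KACong H (.seq e f) (.seq e' f')
  | starCong {e e'} : KACong H e e' → KACong H (.star e) (.star e')
  | addZero (e) : KACong H (.add e .zero) e
  | addIdem (e) : KACong H (.add e e) e
  | addComm (e f) : KACong H (.add e f) (.add f e)
  | addAssoc (e f g) : KACong H (.add e (.add f g)) (.add (.add e f) g)
  | seqAssoc (e f g) : KACong H (.seq e (.seq f g)) (.seq (.seq e f) g)
  | seqDistL (e f g) : KACong H (.seq e (.add f g)) (.add (.seq e f) (.seq e g))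
  | seqDistR (e f g) : KACong H (.seq (.add e f) g) (.add (.seq e g) (.seq f g))
  | seqOneR (e) : KACong H (.seq e .one) e
  | seqOneL (e) : KACong H (.seq .one e) e
  | seqZeroR (e) : KACong H (.seq e .zero) .zero
  | seqZeroL (e) : KACong H (.seq .zero e) .zero
  | starUnfoldL (e) : KACong H (.add .one (.seq e (.star e))) (.star e)
  | starUnfoldR (e) : KACong H (.add .one (.seq (.star e) e)) (.star e)
  | lfpL {e f g} : KACong H (.add (.add e (.seq f g)) g) g →
      KACong H (.add (.seq (.star f) e) g) g
  | lfpR {e f g} : KACong H (.add (.add e (.seq f g)) f) f →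
      KACong H (.add (.seq e (.star g)) f) f
  | hyp {e f} : (e, f) ∈ H → KACong H (.add e f) f

/-- A sequential reduction from `H` to `H'`. -/
structure IsSeqReduction {A : Type} (H H' : HypSet A) (r : Term A → Term A) : Prop where
  implies : Implies H H'
  equiv : ∀ e : Term A, e.noPar → KACong H e (r e)
  closure_eq : ∀ e : Term A, e.noPar → seqCl H e.lang = seqCl H' (r e).lang

/-- Extension of a map on (KA) terms to all CKA terms, homomorphically on `∥`. -/
def parExt {A : Type} (r : Term A → Term A) : Term A → Term A
  | .par e f => .par (parExt r e) (parExt r f)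
  | e => r e

/-! ### Inductive characterisation of sp contexts -/

/-- The generators of series-parallel contexts (Lemma: `PC^sp` is the smallest such set). -/
inductive GenCtx {A : Type} : Pomset (Option A) → Prop
  | star : GenCtx (Pomset.single (none : Option A))
  | seqL {U : Pomset A} {C} : U.IsSP → GenCtx C → GenCtx (Pomset.seq (Pomset.map some U) C)
  | seqR {C} {V : Pomset A} : GenCtx C → V.IsSP → GenCtx (Pomset.seq C (Pomset.map some V))
  | par {U : Pomset A} {C} : U.IsSP → GenCtx C → GenCtx (Pomset.par (Pomset.map some U) C)

/-! ### Reification -/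

/-- Homomorphic extension of a letter map to terms. -/
def rTerm {A : Type} (r : A → Term A) : Term A → Term A
  | .zero => .zero
  | .one => .one
  | .var a => r a
  | .add e f => .add (rTerm r e) (rTerm r f)
  | .seq e f => .seq (rTerm r e) (rTerm r f)
  | .par e f => .par (rTerm r e) (rTerm r f)
  | .star e => .star (rTerm r e)

/-- All letters of a term lie in `Γ`. -/
def TermOver {A : Type} (Γ : Set A) : Term A → Prop
  | .zero => True
  | .one => True
  | .var a => a ∈ Γ
  | .add e f => TermOver Γ e ∧ TermOver Γ f
  | .seq e f => TermOver Γ e ∧ TermOver Γ f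
  | .par e f => TermOver Γ e ∧ TermOver Γ f
  | .star e => TermOver Γ e

/-- Extension of a letter map `r` to (series-parallel) pomsets, as a relation:
`rMap r U V` means `V ∈ r(U)`. -/
inductive rMap {A : Type} (r : A → Term A) : Pomset A → Pomset A → Prop
  | one : rMap r (Pomset.empty A) (Pomset.empty A)
  | var (a : A) {V} : V ∈ (r a).lang → rMap r (Pomset.single a) V
  | seq {U U' V V'} : rMap r U V → rMap r U' V' →
      rMap r (Pomset.seq U U') (Pomset.seq V V')
  | par {U U' V V'} : rMap r U V → rMap r U' V' →
      rMap r (Pomset.par U U') (Pomset.par V V')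

/-- Image of a language under (the pomset extension of) `r`. -/
def rImg {A : Type} (r : A → Term A) (L : Lang A) : Lang A := {V | ∃ U ∈ L, rMap r U V}

/-- Series-parallel pomsets over the subalphabet `Γ`. -/
def SPover {A : Type} (Γ : Set A) : Lang A := {U | U.IsSP ∧ U.Over Γ}

/-- `r : Σ → Term Γ` is a reification from `H` to `H'`. -/
structure IsReification {A : Type} (Γ : Set A) (H H' : HypSet A) (r : A → Term A) : Prop where
  toGamma : ∀ a : A, TermOver Γ (r a)
  equiv : ∀ a : A, CongH H (r a) (.var a)
  expansive : ∀ a ∈ Γ, LeH (∅ : HypSet A) (.var a) (r a)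
  preserves : ∀ L : Lang A, L ⊆ SPover Γ → cl H' L ⊆ SPover Γ
  hyps : ∀ p ∈ H, LeH H' (rTerm r p.1) (rTerm r p.2)

end CKAH

namespace CKAH

/-! ### Isomorphism toolkit -/

theorem LPoset.mk_eq {A : Type} {u v : LPoset A} (g : u.carrier → v.carrier)
    (hs : ∀ y, ∃ x, g x = y) (hle : ∀ x y, g x ≤ g y ↔ x ≤ y)
    (hlab : ∀ x, v.lab (g x) = u.lab x) : (⟦u⟧ : Pomset A) = ⟦v⟧ := by
  apply Quotient.sound
  have hi : Function.Injective g := fun x y h =>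
    le_antisymm ((hle x y).1 (le_of_eq h)) ((hle y x).1 (le_of_eq h.symm))
  exact ⟨⟨Equiv.ofBijective g ⟨hi, hs⟩, fun {a b} => hle a b⟩, hlab⟩

section points
variable {A : Type}

/-- Left point of a sequential composition. -/
def sl {u : LPoset A} (v : LPoset A) (x : u.carrier) : (u.seqL v).carrier := toLex (Sum.inl x)
/-- Right point of a sequential composition. -/
def sr (u : LPoset A) {v : LPoset A} (x : v.carrier) : (u.seqL v).carrier := toLex (Sum.inr x)
/-- Left point of a parallel composition. -/
def pl {u : LPoset A} (v : LPoset A) (x : u.carrier) : (u.parL v).carrier := Sum.inl x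
/-- Right point of a parallel composition. -/
def pr (u : LPoset A) {v : LPoset A} (x : v.carrier) : (u.parL v).carrier := Sum.inr x
/-- Context point of an insertion. -/
def il {c : LPoset (Option A)} (u : LPoset A) (x : c.carrier) (h : c.lab x ≠ none) :
    (c.insL u).carrier := Sum.inl ⟨x, h⟩
/-- Inserted point of an insertion. -/
def ir (c : LPoset (Option A)) {u : LPoset A} (x : u.carrier) : (c.insL u).carrier := Sum.inr x

/-- Case analysis on sequential composition. -/
def sElim {u v : LPoset A} {T : Type*} (f : u.carrier → T) (g : v.carrier → T)
    (p : (u.seqL v).carrier) : T := Sum.elim f g (ofLex p)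
/-- Case analysis on parallel composition. -/
def pElim {u v : LPoset A} {T : Type*} (f : u.carrier → T) (g : v.carrier → T)
    (p : (u.parL v).carrier) : T := Sum.elim f g p
/-- Case analysis on insertion. -/
def iElim {c : LPoset (Option A)} {u : LPoset A} {T : Type*}
    (f : (x : c.carrier) → c.lab x ≠ none → T) (g : u.carrier → T)
    (p : (c.insL u).carrier) : T := Sum.elim (fun x => f x.1 x.2) g p

variable {u v : LPoset A} {c : LPoset (Option A)} {T : Type*}

theorem s_cases (p : (u.seqL v).carrier) : (∃ x, p = sl v x) ∨ (∃ x, p = sr u x) := by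
  rcases p with x | x
  · exact Or.inl ⟨x, rfl⟩
  · exact Or.inr ⟨x, rfl⟩
theorem p_cases (p : (u.parL v).carrier) : (∃ x, p = pl v x) ∨ (∃ x, p = pr u x) := by
  rcases p with x | x
  · exact Or.inl ⟨x, rfl⟩
  · exact Or.inr ⟨x, rfl⟩
theorem i_cases (p : (c.insL u).carrier) : (∃ x h, p = il u x h) ∨ (∃ x, p = ir c x) := by
  rcases p with x | x
  · exact Or.inl ⟨x.1, x.2, rfl⟩
  · exact Or.inr ⟨x, rfl⟩

@[simp] theorem sElim_sl (f : u.carrier → T) (g : v.carrier → T) (x) :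
    sElim f g (sl v x) = f x := rfl
@[simp] theorem sElim_sr (f : u.carrier → T) (g : v.carrier → T) (x) :
    sElim f g (sr u x) = g x := rfl
@[simp] theorem pElim_pl (f : u.carrier → T) (g : v.carrier → T) (x) :
    pElim f g (pl v x) = f x := rfl
@[simp] theorem pElim_pr (f : u.carrier → T) (g : v.carrier → T) (x) :
    pElim f g (pr u x) = g x := rfl
@[simp] theorem iElim_il (f : (x : c.carrier) → c.lab x ≠ none → T) (g : u.carrier → T)
    (x) (h) : iElim f g (il u x h) = f x h := rfl
@[simp] theorem iElim_ir (f : (x : c.carrier) → c.lab x ≠ none → T) (g : u.carrier → T)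
    (x) : iElim f g (ir c x) = g x := rfl

@[simp] theorem lab_sl (x) : (u.seqL v).lab (sl v x) = u.lab x := rfl
@[simp] theorem lab_sr (x) : (u.seqL v).lab (sr u x) = v.lab x := rfl
@[simp] theorem lab_pl (x) : (u.parL v).lab (pl v x) = u.lab x := rfl
@[simp] theorem lab_pr (x) : (u.parL v).lab (pr u x) = v.lab x := rfl
theorem some_lab_il (x) (h) : some ((c.insL u).lab (il u x h)) = c.lab x :=
  Option.some_get _
theorem lab_il (x) (h) (a : A) : (c.insL u).lab (il u x h) = a ↔ c.lab x = some a := by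
  rw [← some_lab_il (u := u) x h, Option.some_inj]
@[simp] theorem lab_ir (x) : (c.insL u).lab (ir c x) = u.lab x := rfl

@[simp] theorem sl_le_sl (x y) : sl (u := u) v x ≤ sl v y ↔ x ≤ y := Sum.Lex.inl_le_inl_iff
@[simp] theorem sr_le_sr (x y) : sr u (v := v) x ≤ sr u y ↔ x ≤ y := Sum.Lex.inr_le_inr_iff
@[simp] theorem sl_le_sr (x y) : sl (u := u) v x ≤ sr u y := Sum.Lex.inl_le_inr _ _
@[simp] theorem sr_le_sl (x y) : ¬ (sr u (v := v) x ≤ sl v y) := Sum.Lex.not_inr_le_inl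
@[simp] theorem pl_le_pl (x y) : pl (u := u) v x ≤ pl v y ↔ x ≤ y := Sum.inl_le_inl_iff
@[simp] theorem pr_le_pr (x y) : pr u (v := v) x ≤ pr u y ↔ x ≤ y := Sum.inr_le_inr_iff
@[simp] theorem pl_le_pr (x y) : ¬ (pl (u := u) v x ≤ pr u y) := Sum.not_inl_le_inr
@[simp] theorem pr_le_pl (x y) : ¬ (pr u (v := v) x ≤ pl v y) := Sum.not_inr_le_inl
@[simp] theorem il_le_il (x y h h') : il (c := c) u x h ≤ il u y h' ↔ x ≤ y := Iff.rfl
@[simp] theorem ir_le_ir (x y) : ir c (u := u) x ≤ ir c y ↔ x ≤ y := Iff.rfl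
theorem il_le_ir' (x y h) : il (c := c) u x h ≤ ir c y ↔
    c.uniqueStarL ∧ ∃ s, c.lab s = none ∧ x ≤ s := Iff.rfl
theorem ir_le_il' (x y h) : ir c (u := u) x ≤ il u y h ↔
    c.uniqueStarL ∧ ∃ s, c.lab s = none ∧ s ≤ y := Iff.rfl
theorem il_le_ir {s} (hs : c.lab s = none) (hu : ∀ t, c.lab t = none → t = s) (x y h) :
    il (c := c) u x h ≤ ir c y ↔ x ≤ s := by
  rw [il_le_ir']
  constructor
  · rintro ⟨-, t, ht, hx⟩
    rwa [hu t ht] at hx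
  · exact fun hx => ⟨⟨s, hs, hu⟩, s, hs, hx⟩
theorem ir_le_il {s} (hs : c.lab s = none) (hu : ∀ t, c.lab t = none → t = s) (x y h) :
    ir c (u := u) x ≤ il u y h ↔ s ≤ y := by
  rw [ir_le_il']
  constructor
  · rintro ⟨-, t, ht, hx⟩
    rwa [hu t ht] at hx
  · exact fun hx => ⟨⟨s, hs, hu⟩, s, hs, hx⟩

@[simp] theorem sl_eq_sl (x y) : sl (u := u) v x = sl v y ↔ x = y := by
  simp [le_antisymm_iff]
@[simp] theorem sr_eq_sr (x y) : sr u (v := v) x = sr u y ↔ x = y := by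
  simp [le_antisymm_iff]
@[simp] theorem pl_eq_pl (x y) : pl (u := u) v x = pl v y ↔ x = y := by
  simp [le_antisymm_iff]
@[simp] theorem pr_eq_pr (x y) : pr u (v := v) x = pr u y ↔ x = y := by
  simp [le_antisymm_iff]

end points

section algebra
variable {A : Type}

theorem seq_assoc (U V W : Pomset A) : (U.seq V).seq W = U.seq (V.seq W) := by
  induction U using Quotient.inductionOn with | _ u
  induction V using Quotient.inductionOn with | _ v
  induction W using Quotient.inductionOn with | _ w
  refine LPoset.mk_eq (u := (u.seqL v).seqL w) (v := u.seqL (v.seqL w))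
    (sElim (sElim (fun x => sl _ x) (fun x => sr _ (sl _ x))) (fun x => sr _ (sr _ x))) ?_ ?_ ?_
  · intro p
    obtain ⟨x, rfl⟩ | ⟨q, rfl⟩ := s_cases p
    · exact ⟨sl _ (sl _ x), rfl⟩
    · obtain ⟨x, rfl⟩ | ⟨x, rfl⟩ := s_cases q
      · exact ⟨sl _ (sr _ x), rfl⟩
      · exact ⟨sr _ x, rfl⟩
  · intro p q
    obtain ⟨p, rfl⟩ | ⟨p, rfl⟩ := s_cases p <;> obtain ⟨q, rfl⟩ | ⟨q, rfl⟩ := s_cases q <;>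
    try obtain ⟨p, rfl⟩ | ⟨p, rfl⟩ := s_cases p
    all_goals try obtain ⟨q, rfl⟩ | ⟨q, rfl⟩ := s_cases q
    all_goals simp
  · intro p
    obtain ⟨p, rfl⟩ | ⟨p, rfl⟩ := s_cases p
    · obtain ⟨p, rfl⟩ | ⟨p, rfl⟩ := s_cases p <;> rfl
    · rfl

theorem par_assoc (U V W : Pomset A) : (U.par V).par W = U.par (V.par W) := by
  induction U using Quotient.inductionOn with | _ u
  induction V using Quotient.inductionOn with | _ v
  induction W using Quotient.inductionOn with | _ w
  refine LPoset.mk_eq (u := (u.parL v).parL w) (v := u.parL (v.parL w))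
    (pElim (pElim (fun x => pl _ x) (fun x => pr _ (pl _ x))) (fun x => pr _ (pr _ x))) ?_ ?_ ?_
  · intro p
    obtain ⟨x, rfl⟩ | ⟨q, rfl⟩ := p_cases p
    · exact ⟨pl _ (pl _ x), rfl⟩
    · obtain ⟨x, rfl⟩ | ⟨x, rfl⟩ := p_cases q
      · exact ⟨pl _ (pr _ x), rfl⟩
      · exact ⟨pr _ x, rfl⟩
  · intro p q
    obtain ⟨p, rfl⟩ | ⟨p, rfl⟩ := p_cases p <;> obtain ⟨q, rfl⟩ | ⟨q, rfl⟩ := p_cases q <;>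
    try obtain ⟨p, rfl⟩ | ⟨p, rfl⟩ := p_cases p
    all_goals try obtain ⟨q, rfl⟩ | ⟨q, rfl⟩ := p_cases q
    all_goals simp
  · intro p
    obtain ⟨p, rfl⟩ | ⟨p, rfl⟩ := p_cases p
    · obtain ⟨p, rfl⟩ | ⟨p, rfl⟩ := p_cases p <;> rfl
    · rfl

theorem par_comm (U V : Pomset A) : U.par V = V.par U := by
  induction U using Quotient.inductionOn with | _ u
  induction V using Quotient.inductionOn with | _ v
  refine LPoset.mk_eq (u := u.parL v) (v := v.parL u) (pElim (pr _) (pl _)) ?_ ?_ ?_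
  · intro p
    obtain ⟨x, rfl⟩ | ⟨x, rfl⟩ := p_cases p
    · exact ⟨pr _ x, rfl⟩
    · exact ⟨pl _ x, rfl⟩
  · intro p q
    obtain ⟨p, rfl⟩ | ⟨p, rfl⟩ := p_cases p <;> obtain ⟨q, rfl⟩ | ⟨q, rfl⟩ := p_cases q <;> simp
  · intro p
    obtain ⟨p, rfl⟩ | ⟨p, rfl⟩ := p_cases p <;> rfl

theorem seq_empty (U : Pomset A) : U.seq (Pomset.empty A) = U := by
  induction U using Quotient.inductionOn with | _ u
  refine (LPoset.mk_eq (u := u) (v := u.seqL (LPoset.emptyL A)) (sl _) ?_ ?_ ?_).symm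
  · intro p
    obtain ⟨x, rfl⟩ | ⟨x, rfl⟩ := s_cases p
    · exact ⟨x, rfl⟩
    · exact x.elim0
  · intro x y; simp
  · intro x; rfl

theorem empty_seq (U : Pomset A) : (Pomset.empty A).seq U = U := by
  induction U using Quotient.inductionOn with | _ u
  refine (LPoset.mk_eq (u := u) (v := (LPoset.emptyL A).seqL u) (sr _) ?_ ?_ ?_).symm
  · intro p
    obtain ⟨x, rfl⟩ | ⟨x, rfl⟩ := s_cases p
    · exact x.elim0
    · exact ⟨x, rfl⟩
  · intro x y; simp
  · intro x; rfl

theorem par_empty (U : Pomset A) : U.par (Pomset.empty A) = U := by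
  induction U using Quotient.inductionOn with | _ u
  refine (LPoset.mk_eq (u := u) (v := u.parL (LPoset.emptyL A)) (pl _) ?_ ?_ ?_).symm
  · intro p
    obtain ⟨x, rfl⟩ | ⟨x, rfl⟩ := p_cases p
    · exact ⟨x, rfl⟩
    · exact x.elim0
  · intro x y; simp
  · intro x; rfl

theorem map_empty {B : Type} (f : A → B) : (Pomset.empty A).map f = Pomset.empty B := by
  refine LPoset.mk_eq (u := (LPoset.emptyL A).mapL f) (v := LPoset.emptyL B) id ?_ ?_ ?_
  · exact fun x => ⟨x, rfl⟩
  · intro x; exact x.elim0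
  · intro x; exact x.elim0

theorem map_single {B : Type} (f : A → B) (a : A) :
    (Pomset.single a).map f = Pomset.single (f a) := rfl

theorem map_seq {B : Type} (f : A → B) (U V : Pomset A) :
    (U.seq V).map f = (U.map f).seq (V.map f) := by
  induction U using Quotient.inductionOn with | _ u
  induction V using Quotient.inductionOn with | _ v
  refine LPoset.mk_eq (u := (u.seqL v).mapL f) (v := (u.mapL f).seqL (v.mapL f)) id ?_ ?_ ?_
  · exact fun x => ⟨x, rfl⟩
  · intro x y; exact Iff.rfl
  · rintro (x | x) <;> rfl

theorem map_par {B : Type} (f : A → B) (U V : Pomset A) :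
    (U.par V).map f = (U.map f).par (V.map f) := by
  induction U using Quotient.inductionOn with | _ u
  induction V using Quotient.inductionOn with | _ v
  refine LPoset.mk_eq (u := (u.parL v).mapL f) (v := (u.mapL f).parL (v.mapL f)) id ?_ ?_ ?_
  · exact fun x => ⟨x, rfl⟩
  · intro x y; exact Iff.rfl
  · rintro (x | x) <;> rfl

theorem map_isSP {B : Type} (f : A → B) {U : Pomset A} (h : U.IsSP) : (U.map f).IsSP := by
  induction h with
  | empty => rw [map_empty]; exact .empty
  | single a => exact .single (f a)
  | seq _ _ h1 h2 => rw [map_seq]; exact h1.seq h2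
  | par _ _ h1 h2 => rw [map_par]; exact h1.par h2

end algebra
end CKAH

namespace CKAH

section contexts
variable {A : Type}

theorem ins_star (X : Pomset A) : (Pomset.single (none : Option A)).ins X = X := by
  induction X using Quotient.inductionOn with | _ x
  refine (LPoset.mk_eq (u := x) (v := (LPoset.singleL none).insL x) (ir _) ?_ ?_ ?_).symm
  · intro p
    obtain ⟨y, h, rfl⟩ | ⟨y, rfl⟩ := i_cases p
    · exact (h rfl).elim
    · exact ⟨y, rfl⟩
  · intro p q; simp
  · intro p; rfl

/-- Star node data. -/
def IsStar (c : LPoset (Option A)) (s : c.carrier) : Prop :=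
  c.lab s = none ∧ ∀ t, c.lab t = none → t = s

theorem isStar_seqL (u : LPoset A) {c : LPoset (Option A)} {s} (h : IsStar c s) :
    IsStar ((u.mapL some).seqL c) (sr _ s) := by
  refine ⟨h.1, fun t ht => ?_⟩
  obtain ⟨t, rfl⟩ | ⟨t, rfl⟩ := s_cases t
  · exact absurd ht (Option.some_ne_none _)
  · rw [h.2 t ht]

theorem isStar_seqR (u : LPoset A) {c : LPoset (Option A)} {s} (h : IsStar c s) :
    IsStar (c.seqL (u.mapL some)) (sl _ s) := by
  refine ⟨h.1, fun t ht => ?_⟩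
  obtain ⟨t, rfl⟩ | ⟨t, rfl⟩ := s_cases t
  · rw [h.2 t ht]
  · exact absurd ht (Option.some_ne_none _)

theorem isStar_par (u : LPoset A) {c : LPoset (Option A)} {s} (h : IsStar c s) :
    IsStar ((u.mapL some).parL c) (pr _ s) := by
  refine ⟨h.1, fun t ht => ?_⟩
  obtain ⟨t, rfl⟩ | ⟨t, rfl⟩ := p_cases t
  · exact absurd ht (Option.some_ne_none _)
  · rw [h.2 t ht]

theorem ne_sl {c d : LPoset (Option A)} {a} (h : c.lab a ≠ none) :
    (c.seqL d).lab (sl d a) ≠ none := h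
theorem ne_sr {c d : LPoset (Option A)} {a} (h : d.lab a ≠ none) :
    (c.seqL d).lab (sr c a) ≠ none := h
theorem ne_pr {c d : LPoset (Option A)} {a} (h : d.lab a ≠ none) :
    (c.parL d).lab (pr c a) ≠ none := h
/-- Point of a relabelling. -/
def ml (u : LPoset A) (x : u.carrier) : (u.mapL (some : A → Option A)).carrier := x
@[simp] theorem ml_le_ml (u : LPoset A) (x y : u.carrier) : ml u x ≤ ml u y ↔ x ≤ y := Iff.rfl
theorem ne_map (u : LPoset A) (a : (u.mapL some).carrier) : (u.mapL some).lab a ≠ none :=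
  Option.some_ne_none _
theorem ne_pl {c d : LPoset (Option A)} {a} (h : c.lab a ≠ none) :
    (c.parL d).lab (pl d a) ≠ none := h

theorem ins_seqL (u : LPoset A) {c : LPoset (Option A)} {s} (h : IsStar c s) (x : LPoset A) :
    (⟦((u.mapL some).seqL c).insL x⟧ : Pomset A) = ⟦u.seqL (c.insL x)⟧ := by
  have h' := isStar_seqL u h
  refine (LPoset.mk_eq (sElim (fun a => il _ (sl _ (ml u a)) (ne_sl (ne_map u (ml u a))))
    (iElim (fun a ha => il _ (sr _ a) (ne_sr ha)) (fun a => ir _ a))) ?_ ?_ ?_).symm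
  · intro p
    obtain ⟨p, hp, rfl⟩ | ⟨p, rfl⟩ := i_cases p
    · obtain ⟨p, rfl⟩ | ⟨p, rfl⟩ := s_cases p
      · exact ⟨sl _ p, rfl⟩
      · exact ⟨sr _ (il _ p hp), rfl⟩
    · exact ⟨sr _ (ir _ p), rfl⟩
  · intro p q
    obtain ⟨p, rfl⟩ | ⟨p, rfl⟩ := s_cases p <;> obtain ⟨q, rfl⟩ | ⟨q, rfl⟩ := s_cases q <;>
    try obtain ⟨p, hp, rfl⟩ | ⟨p, rfl⟩ := i_cases p
    all_goals try obtain ⟨q, hq, rfl⟩ | ⟨q, rfl⟩ := i_cases q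
    all_goals simp [il_le_ir h.1 h.2, ir_le_il h.1 h.2, il_le_ir h'.1 h'.2, ir_le_il h'.1 h'.2]
  · intro p
    obtain ⟨p, rfl⟩ | ⟨p, rfl⟩ := s_cases p
    · rfl
    · obtain ⟨p, hp, rfl⟩ | ⟨p, rfl⟩ := i_cases p <;> rfl

theorem ins_seqR (u : LPoset A) {c : LPoset (Option A)} {s} (h : IsStar c s) (x : LPoset A) :
    (⟦(c.seqL (u.mapL some)).insL x⟧ : Pomset A) = ⟦(c.insL x).seqL u⟧ := by
  have h' := isStar_seqR u h
  refine (LPoset.mk_eq (sElim (iElim (fun a ha => il _ (sl _ a) (ne_sl ha)) (fun a => ir _ a))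
    (fun a => il _ (sr _ (ml u a)) (ne_sr (ne_map u (ml u a))))) ?_ ?_ ?_).symm
  · intro p
    obtain ⟨p, hp, rfl⟩ | ⟨p, rfl⟩ := i_cases p
    · obtain ⟨p, rfl⟩ | ⟨p, rfl⟩ := s_cases p
      · exact ⟨sl _ (il _ p hp), rfl⟩
      · exact ⟨sr _ p, rfl⟩
    · exact ⟨sl _ (ir _ p), rfl⟩
  · intro p q
    obtain ⟨p, rfl⟩ | ⟨p, rfl⟩ := s_cases p <;> obtain ⟨q, rfl⟩ | ⟨q, rfl⟩ := s_cases q <;>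
    try obtain ⟨p, hp, rfl⟩ | ⟨p, rfl⟩ := i_cases p
    all_goals try obtain ⟨q, hq, rfl⟩ | ⟨q, rfl⟩ := i_cases q
    all_goals simp [il_le_ir h.1 h.2, ir_le_il h.1 h.2, il_le_ir h'.1 h'.2, ir_le_il h'.1 h'.2]
  · intro p
    obtain ⟨p, rfl⟩ | ⟨p, rfl⟩ := s_cases p
    · obtain ⟨p, hp, rfl⟩ | ⟨p, rfl⟩ := i_cases p <;> rfl
    · rfl

theorem ins_par (u : LPoset A) {c : LPoset (Option A)} {s} (h : IsStar c s) (x : LPoset A) :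
    (⟦((u.mapL some).parL c).insL x⟧ : Pomset A) = ⟦u.parL (c.insL x)⟧ := by
  have h' := isStar_par u h
  refine (LPoset.mk_eq (pElim (fun a => il _ (pl _ (ml u a)) (ne_pl (ne_map u (ml u a))))
    (iElim (fun a ha => il _ (pr _ a) (ne_pr ha)) (fun a => ir _ a))) ?_ ?_ ?_).symm
  · intro p
    obtain ⟨p, hp, rfl⟩ | ⟨p, rfl⟩ := i_cases p
    · obtain ⟨p, rfl⟩ | ⟨p, rfl⟩ := p_cases p
      · exact ⟨pl _ p, rfl⟩
      · exact ⟨pr _ (il _ p hp), rfl⟩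
    · exact ⟨pr _ (ir _ p), rfl⟩
  · intro p q
    obtain ⟨p, rfl⟩ | ⟨p, rfl⟩ := p_cases p <;> obtain ⟨q, rfl⟩ | ⟨q, rfl⟩ := p_cases q <;>
    try obtain ⟨p, hp, rfl⟩ | ⟨p, rfl⟩ := i_cases p
    all_goals try obtain ⟨q, hq, rfl⟩ | ⟨q, rfl⟩ := i_cases q
    all_goals simp [il_le_ir h.1 h.2, ir_le_il h.1 h.2, il_le_ir h'.1 h'.2, ir_le_il h'.1 h'.2]
  · intro p
    obtain ⟨p, rfl⟩ | ⟨p, rfl⟩ := p_cases p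
    · rfl
    · obtain ⟨p, hp, rfl⟩ | ⟨p, rfl⟩ := i_cases p <;> rfl

/-- Contexts as functions on pomsets. -/
inductive Fc : (Pomset A → Pomset A) → Prop
  | id : Fc (fun X => X)
  | seqL {U : Pomset A} {F : Pomset A → Pomset A} : U.IsSP → Fc F → Fc (fun X => U.seq (F X))
  | seqR {U : Pomset A} {F : Pomset A → Pomset A} : U.IsSP → Fc F → Fc (fun X => (F X).seq U)
  | par {U : Pomset A} {F : Pomset A → Pomset A} : U.IsSP → Fc F → Fc (fun X => U.par (F X))

theorem Fc.comp {F G : Pomset A → Pomset A} (hF : Fc F) (hG : Fc G) : Fc (fun X => F (G X)) := by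
  induction hF with
  | id => exact hG
  | seqL hU _ ih => exact ih.seqL hU
  | seqR hU _ ih => exact ih.seqR hU
  | par hU _ ih => exact ih.par hU

theorem Fc.isSP {F : Pomset A → Pomset A} (hF : Fc F) {X} (hX : X.IsSP) : (F X).IsSP := by
  induction hF with
  | id => exact hX
  | seqL hU _ ih => exact hU.seq ih
  | seqR hU _ ih => exact ih.seq hU
  | par hU _ ih => exact hU.par ih

theorem Fc.exists_ctx {F : Pomset A → Pomset A} (hF : Fc F) :
    ∃ C : Pomset (Option A), C.IsSPCtx ∧ ∀ X, C.ins X = F X := by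
  suffices h : ∃ (c : LPoset (Option A)) (s : c.carrier), IsStar c s ∧
      Pomset.IsSP (⟦c⟧ : Pomset (Option A)) ∧ ∀ X, Pomset.ins ⟦c⟧ X = F X by
    obtain ⟨c, s, h, hsp, hi⟩ := h
    exact ⟨⟦c⟧, ⟨⟨s, h.1, h.2⟩, hsp⟩, hi⟩
  induction hF with
  | id => exact ⟨LPoset.singleL none, PUnit.unit, ⟨rfl, fun _ _ => rfl⟩, .single _, ins_star⟩
  | @seqL U F hU _ ih =>
    obtain ⟨c, s, h, hsp, hi⟩ := ih
    induction U using Quotient.inductionOn with | _ u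
    refine ⟨(u.mapL some).seqL c, sr _ s, isStar_seqL u h, (map_isSP some hU).seq hsp, fun X => ?_⟩
    beta_reduce
    rw [← hi X]
    induction X using Quotient.inductionOn with | _ x
    exact ins_seqL u h x
  | @seqR U F hU _ ih =>
    obtain ⟨c, s, h, hsp, hi⟩ := ih
    induction U using Quotient.inductionOn with | _ u
    refine ⟨c.seqL (u.mapL some), sl _ s, isStar_seqR u h, hsp.seq (map_isSP some hU), fun X => ?_⟩
    beta_reduce
    rw [← hi X]
    induction X using Quotient.inductionOn with | _ x
    exact ins_seqR u h x
  | @par U F hU _ ih =>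
    obtain ⟨c, s, h, hsp, hi⟩ := ih
    induction U using Quotient.inductionOn with | _ u
    refine ⟨(u.mapL some).parL c, pr _ s, isStar_par u h, (map_isSP some hU).par hsp, fun X => ?_⟩
    beta_reduce
    rw [← hi X]
    induction X using Quotient.inductionOn with | _ x
    exact ins_par u h x

/-- The pomset is a context whose insertion is given by a functional context. -/
def GoodCtx (C : Pomset (Option A)) : Prop :=
  ∃ (c : LPoset (Option A)) (s : c.carrier), C = ⟦c⟧ ∧ IsStar c s ∧ ∃ F, Fc F ∧ ∀ X, C.ins X = F X

/-- The pomset has two distinct stars. -/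
def TwoStar (C : Pomset (Option A)) : Prop :=
  ∃ (c : LPoset (Option A)) (s t : c.carrier), C = ⟦c⟧ ∧ c.lab s = none ∧ c.lab t = none ∧ s ≠ t

theorem TwoStar.not_ctx {C : Pomset (Option A)} (h : TwoStar C) : ¬ C.IsCtx := by
  rintro hc
  obtain ⟨c, s, t, rfl, hs, ht, hst⟩ := h
  obtain ⟨w, -, hw⟩ := hc
  exact hst ((hw s hs).trans (hw t ht).symm)

theorem TwoStar.seqL {C D : Pomset (Option A)} (h : TwoStar C) : TwoStar (C.seq D) := by
  obtain ⟨c, s, t, rfl, hs, ht, hst⟩ := h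
  induction D using Quotient.inductionOn with | _ d
  exact ⟨c.seqL d, sl _ s, sl _ t, rfl, hs, ht, by simpa using hst⟩

theorem TwoStar.seqR {C D : Pomset (Option A)} (h : TwoStar C) : TwoStar (D.seq C) := by
  obtain ⟨c, s, t, rfl, hs, ht, hst⟩ := h
  induction D using Quotient.inductionOn with | _ d
  exact ⟨d.seqL c, sr _ s, sr _ t, rfl, hs, ht, by simpa using hst⟩

theorem TwoStar.par {C D : Pomset (Option A)} (h : TwoStar C) : TwoStar (C.par D) := by
  obtain ⟨c, s, t, rfl, hs, ht, hst⟩ := h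
  induction D using Quotient.inductionOn with | _ d
  exact ⟨c.parL d, pl _ s, pl _ t, rfl, hs, ht, by simpa using hst⟩

theorem TwoStar.par' {C D : Pomset (Option A)} (h : TwoStar C) : TwoStar (D.par C) := by
  rw [par_comm]; exact h.par

theorem GoodCtx.two_seq {C D : Pomset (Option A)} (h : GoodCtx C) (h' : GoodCtx D) :
    TwoStar (C.seq D) := by
  obtain ⟨c, s, rfl, hs, -⟩ := h
  obtain ⟨d, t, rfl, ht, -⟩ := h'
  refine ⟨c.seqL d, sl _ s, sr _ t, rfl, hs.1, ht.1, fun h => ?_⟩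
  exact sr_le_sl (u := c) (v := d) t s h.ge

theorem GoodCtx.two_par {C D : Pomset (Option A)} (h : GoodCtx C) (h' : GoodCtx D) :
    TwoStar (C.par D) := by
  obtain ⟨c, s, rfl, hs, -⟩ := h
  obtain ⟨d, t, rfl, ht, -⟩ := h'
  refine ⟨c.parL d, pl _ s, pr _ t, rfl, hs.1, ht.1, fun h => ?_⟩
  exact pr_le_pl (u := c) (v := d) t s h.ge

theorem GoodCtx.seqL {C : Pomset (Option A)} (h : GoodCtx C) {U : Pomset A} (hU : U.IsSP) :
    GoodCtx ((U.map some).seq C) := by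
  obtain ⟨c, s, rfl, hs, F, hF, hi⟩ := h
  induction U using Quotient.inductionOn with | _ u
  refine ⟨_, _, rfl, isStar_seqL u hs, _, hF.seqL hU, fun X => ?_⟩
  rw [← hi X]
  induction X using Quotient.inductionOn with | _ x
  exact ins_seqL u hs x

theorem GoodCtx.seqR {C : Pomset (Option A)} (h : GoodCtx C) {U : Pomset A} (hU : U.IsSP) :
    GoodCtx (C.seq (U.map some)) := by
  obtain ⟨c, s, rfl, hs, F, hF, hi⟩ := h
  induction U using Quotient.inductionOn with | _ u
  refine ⟨_, _, rfl, isStar_seqR u hs, _, hF.seqR hU, fun X => ?_⟩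
  rw [← hi X]
  induction X using Quotient.inductionOn with | _ x
  exact ins_seqR u hs x

theorem GoodCtx.par {C : Pomset (Option A)} (h : GoodCtx C) {U : Pomset A} (hU : U.IsSP) :
    GoodCtx ((U.map some).par C) := by
  obtain ⟨c, s, rfl, hs, F, hF, hi⟩ := h
  induction U using Quotient.inductionOn with | _ u
  refine ⟨_, _, rfl, isStar_par u hs, _, hF.par hU, fun X => ?_⟩
  rw [← hi X]
  induction X using Quotient.inductionOn with | _ x
  exact ins_par u hs x

theorem sp_trichotomy {C : Pomset (Option A)} (h : C.IsSP) :
    (∃ U : Pomset A, U.IsSP ∧ C = U.map some) ∨ GoodCtx C ∨ TwoStar C := by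
  induction h with
  | empty => exact Or.inl ⟨_, .empty, (map_empty some).symm⟩
  | single a =>
    cases a with
    | none => exact Or.inr (Or.inl ⟨LPoset.singleL none, PUnit.unit, rfl, ⟨rfl, fun _ _ => rfl⟩,
        _, .id, ins_star⟩)
    | some a => exact Or.inl ⟨_, .single a, rfl⟩
  | seq _ _ h1 h2 =>
    obtain ⟨U, hU, rfl⟩ | h1 | h1 := h1
    · obtain ⟨V, hV, rfl⟩ | h2 | h2 := h2
      · exact Or.inl ⟨_, hU.seq hV, (map_seq _ _ _).symm⟩
      · exact Or.inr (Or.inl (h2.seqL hU))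
      · exact Or.inr (Or.inr h2.seqR)
    · obtain ⟨V, hV, rfl⟩ | h2 | h2 := h2
      · exact Or.inr (Or.inl (h1.seqR hV))
      · exact Or.inr (Or.inr (h1.two_seq h2))
      · exact Or.inr (Or.inr h2.seqR)
    · exact Or.inr (Or.inr h1.seqL)
  | par _ _ h1 h2 =>
    obtain ⟨U, hU, rfl⟩ | h1 | h1 := h1
    · obtain ⟨V, hV, rfl⟩ | h2 | h2 := h2
      · exact Or.inl ⟨_, hU.par hV, (map_par _ _ _).symm⟩
      · exact Or.inr (Or.inl (h2.par hU))
      · exact Or.inr (Or.inr h2.par')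
    · obtain ⟨V, hV, rfl⟩ | h2 | h2 := h2
      · rw [par_comm]; exact Or.inr (Or.inl (h1.par hV))
      · exact Or.inr (Or.inr (h1.two_par h2))
      · exact Or.inr (Or.inr h2.par')
    · exact Or.inr (Or.inr h1.par)

theorem exists_Fc {C : Pomset (Option A)} (h : C.IsSPCtx) :
    ∃ F, Fc F ∧ ∀ X, C.ins X = F X := by
  obtain ⟨U, hU, rfl⟩ | h' | h' := sp_trichotomy h.2
  · obtain ⟨hc, -⟩ := h
    induction U using Quotient.inductionOn with | _ u
    obtain ⟨w, hw, -⟩ := hc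
    exact absurd hw (Option.some_ne_none _)
  · obtain ⟨c, s, -, -, h⟩ := h'
    exact h
  · exact absurd h.1 h'.not_ctx

end contexts
end CKAH

namespace CKAH

section soundness
variable {A : Type}

theorem pow_isSP {L : Lang A} (h : ∀ U ∈ L, U.IsSP) (n : ℕ) : ∀ U ∈ L.pow n, U.IsSP := by
  induction n with
  | zero => rintro U rfl; exact .empty
  | succ n ih => rintro _ ⟨U, hU, V, hV, rfl⟩; exact (ih U hU).seq (h V hV)

theorem lang_isSP (e : Term A) : ∀ U ∈ e.lang, U.IsSP := by
  induction e with
  | zero => intro U h; exact h.elim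
  | one => rintro U rfl; exact .empty
  | var a => rintro U rfl; exact .single a
  | add e f he hf => rintro U (h | h); exacts [he U h, hf U h]
  | seq e f he hf => rintro _ ⟨U, hU, V, hV, rfl⟩; exact (he U hU).seq (hf V hV)
  | par e f he hf => rintro _ ⟨U, hU, V, hV, rfl⟩; exact (he U hU).par (hf V hV)
  | star e he =>
    intro U hU
    obtain ⟨n, hn⟩ := Set.mem_iUnion.1 hU
    exact pow_isSP he n U hn

/-- Closedness of a set of pomsets under the hypotheses. -/
def HClosed (H : HypSet A) (K : Lang A) : Prop :=
  ∀ e f : Term A, (e, f) ∈ H → ∀ F, Fc F → (∀ V ∈ f.lang, F V ∈ K) → ∀ U ∈ e.lang, F U ∈ K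

theorem cl_HClosed (H : HypSet A) (L : Lang A) : HClosed H (cl H L) := by
  intro e f hef F hF h U hU
  obtain ⟨C, hC, hi⟩ := hF.exists_ctx
  rw [← hi]
  exact closure.step hef hC (fun V hV => by rw [hi]; exact h V hV) hU

/-- Semantic inequality relative to `K`: `L ⊆` the closure of `M`. -/
def SLe (K : Lang A) (L M : Lang A) : Prop :=
  ∀ F, Fc F → (∀ V ∈ M, F V ∈ K) → ∀ U ∈ L, F U ∈ K

variable {K : Lang A}

theorem SLe.of_subset {L M : Lang A} (h : L ⊆ M) : SLe K L M :=
  fun _ _ hM U hU => hM U (h hU)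

theorem SLe.trans {L M N : Lang A} (h : SLe K L M) (h' : SLe K M N) : SLe K L N :=
  fun F hF hN => h F hF (h' F hF hN)

theorem SLe.union {L L' M M' : Lang A} (h : SLe K L M) (h' : SLe K L' M') :
    SLe K (L ∪ L') (M ∪ M') := by
  rintro F hF hM U (hU | hU)
  · exact h F hF (fun V hV => hM V (Or.inl hV)) U hU
  · exact h' F hF (fun V hV => hM V (Or.inr hV)) U hU

theorem SLe.seq {L L' M M' : Lang A} (h : SLe K L M) (h' : SLe K L' M')
    (hL : ∀ U ∈ L, U.IsSP) (hM : ∀ U ∈ M', U.IsSP) :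
    SLe K (L.seq L') (M.seq M') := by
  rintro F hF hK _ ⟨U, hU, V, hV, rfl⟩
  refine h' _ (hF.comp (Fc.seqL (hL U hU) .id)) (fun V hV => ?_) V hV
  exact h _ (hF.comp (Fc.seqR (hM V hV) .id)) (fun U hU => hK _ ⟨U, hU, V, hV, rfl⟩) U hU

theorem SLe.par {L L' M M' : Lang A} (h : SLe K L M) (h' : SLe K L' M')
    (hL : ∀ U ∈ L, U.IsSP) (hM : ∀ U ∈ M', U.IsSP) :
    SLe K (L.par L') (M.par M') := by
  rintro F hF hK _ ⟨U, hU, V, hV, rfl⟩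
  refine h' _ (hF.comp (Fc.par (hL U hU) .id)) (fun V hV => ?_) V hV
  rw [par_comm]
  refine h _ (hF.comp (Fc.par (hM V hV) .id)) (fun U hU => ?_) U hU
  show F (V.par U) ∈ K
  rw [par_comm]
  exact hK _ ⟨U, hU, V, hV, rfl⟩

theorem SLe.pow {L M : Lang A} (h : SLe K L M) (hL : ∀ U ∈ L, U.IsSP) (hM : ∀ U ∈ M, U.IsSP)
    (n : ℕ) : SLe K (L.pow n) (M.pow n) := by
  induction n with
  | zero => exact SLe.of_subset subset_rfl
  | succ n ih => exact ih.seq h (pow_isSP hL n) hM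

theorem SLe.star {L M : Lang A} (h : SLe K L M) (hL : ∀ U ∈ L, U.IsSP) (hM : ∀ U ∈ M, U.IsSP) :
    SLe K L.star M.star := by
  intro F hF hK U hU
  obtain ⟨n, hn⟩ := Set.mem_iUnion.1 hU
  exact h.pow hL hM n F hF (fun V hV => hK V (Set.mem_iUnion.2 ⟨n, hV⟩)) U hn

theorem seq_langAssoc (L M N : Lang A) : L.seq (M.seq N) = (L.seq M).seq N := by
  ext W
  constructor
  · rintro ⟨U, hU, _, ⟨V, hV, X, hX, rfl⟩, rfl⟩
    exact ⟨_, ⟨U, hU, V, hV, rfl⟩, X, hX, (seq_assoc _ _ _).symm⟩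
  · rintro ⟨_, ⟨U, hU, V, hV, rfl⟩, X, hX, rfl⟩
    exact ⟨U, hU, _, ⟨V, hV, X, hX, rfl⟩, seq_assoc _ _ _⟩

theorem par_langAssoc (L M N : Lang A) : L.par (M.par N) = (L.par M).par N := by
  ext W
  constructor
  · rintro ⟨U, hU, _, ⟨V, hV, X, hX, rfl⟩, rfl⟩
    exact ⟨_, ⟨U, hU, V, hV, rfl⟩, X, hX, (par_assoc _ _ _).symm⟩
  · rintro ⟨_, ⟨U, hU, V, hV, rfl⟩, X, hX, rfl⟩
    exact ⟨U, hU, _, ⟨V, hV, X, hX, rfl⟩, par_assoc _ _ _⟩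

theorem par_langComm (L M : Lang A) : L.par M = M.par L := by
  ext W
  constructor <;>
  · rintro ⟨U, hU, V, hV, rfl⟩
    exact ⟨V, hV, U, hU, par_comm _ _⟩

theorem seq_langOne (L : Lang A) : L.seq {Pomset.empty A} = L := by
  ext W
  constructor
  · rintro ⟨U, hU, _, rfl, rfl⟩; rwa [seq_empty]
  · intro h; exact ⟨W, h, _, rfl, (seq_empty W).symm⟩

theorem one_langSeq (L : Lang A) : Lang.seq {Pomset.empty A} L = L := by
  ext W
  constructor
  · rintro ⟨_, rfl, U, hU, rfl⟩; rwa [empty_seq]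
  · intro h; exact ⟨_, rfl, W, h, (empty_seq W).symm⟩

theorem par_langOne (L : Lang A) : L.par {Pomset.empty A} = L := by
  ext W
  constructor
  · rintro ⟨U, hU, _, rfl, rfl⟩; rwa [par_empty]
  · intro h; exact ⟨W, h, _, rfl, (par_empty W).symm⟩

theorem seq_langUnion (L M N : Lang A) : L.seq (M ∪ N) = L.seq M ∪ L.seq N := by
  ext W
  constructor
  · rintro ⟨U, hU, V, hV | hV, rfl⟩
    exacts [Or.inl ⟨U, hU, V, hV, rfl⟩, Or.inr ⟨U, hU, V, hV, rfl⟩]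
  · rintro (⟨U, hU, V, hV, rfl⟩ | ⟨U, hU, V, hV, rfl⟩)
    exacts [⟨U, hU, V, Or.inl hV, rfl⟩, ⟨U, hU, V, Or.inr hV, rfl⟩]

theorem par_langUnion (L M N : Lang A) : L.par (M ∪ N) = L.par M ∪ L.par N := by
  ext W
  constructor
  · rintro ⟨U, hU, V, hV | hV, rfl⟩
    exacts [Or.inl ⟨U, hU, V, hV, rfl⟩, Or.inr ⟨U, hU, V, hV, rfl⟩]
  · rintro (⟨U, hU, V, hV, rfl⟩ | ⟨U, hU, V, hV, rfl⟩)
    exacts [⟨U, hU, V, Or.inl hV, rfl⟩, ⟨U, hU, V, Or.inr hV, rfl⟩]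

theorem union_langSeq (L M N : Lang A) : (L ∪ M).seq N = L.seq N ∪ M.seq N := by
  ext W
  constructor
  · rintro ⟨U, hU | hU, V, hV, rfl⟩
    exacts [Or.inl ⟨U, hU, V, hV, rfl⟩, Or.inr ⟨U, hU, V, hV, rfl⟩]
  · rintro (⟨U, hU, V, hV, rfl⟩ | ⟨U, hU, V, hV, rfl⟩)
    exacts [⟨U, Or.inl hU, V, hV, rfl⟩, ⟨U, Or.inr hU, V, hV, rfl⟩]

theorem pow_comm (L : Lang A) (n : ℕ) : (L.pow n).seq L = L.seq (L.pow n) := by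
  induction n with
  | zero => exact (one_langSeq L).trans (seq_langOne L).symm
  | succ n ih =>
    show ((L.pow n).seq L).seq L = L.seq ((L.pow n).seq L)
    rw [seq_langAssoc, ← ih]

theorem star_unfoldR (L : Lang A) : {Pomset.empty A} ∪ L.star.seq L = L.star := by
  ext W
  constructor
  · rintro (h | ⟨U, hU, V, hV, rfl⟩)
    · exact Set.mem_iUnion.2 ⟨0, h⟩
    · obtain ⟨n, hn⟩ := Set.mem_iUnion.1 hU
      exact Set.mem_iUnion.2 ⟨n + 1, U, hn, V, hV, rfl⟩
  · intro h
    obtain ⟨n, hn⟩ := Set.mem_iUnion.1 h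
    cases n with
    | zero => exact Or.inl hn
    | succ n =>
      obtain ⟨U, hU, V, hV, rfl⟩ := hn
      exact Or.inr ⟨U, Set.mem_iUnion.2 ⟨n, hU⟩, V, hV, rfl⟩

theorem star_comm (L : Lang A) : L.star.seq L = L.seq L.star := by
  ext W
  constructor
  · rintro ⟨U, hU, V, hV, rfl⟩
    obtain ⟨n, hn⟩ := Set.mem_iUnion.1 hU
    have : U.seq V ∈ (L.pow n).seq L := ⟨U, hn, V, hV, rfl⟩
    rw [pow_comm] at this
    obtain ⟨U', hU', V', hV', h⟩ := this
    exact ⟨U', hU', V', Set.mem_iUnion.2 ⟨n, hV'⟩, h⟩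
  · rintro ⟨U, hU, V, hV, rfl⟩
    obtain ⟨n, hn⟩ := Set.mem_iUnion.1 hV
    have : U.seq V ∈ L.seq (L.pow n) := ⟨U, hU, V, hn, rfl⟩
    rw [← pow_comm] at this
    obtain ⟨U', hU', V', hV', h⟩ := this
    exact ⟨U', Set.mem_iUnion.2 ⟨n, hU'⟩, V', hV', h⟩

theorem SLe.lfpL {E P G : Lang A} (hP : ∀ U ∈ P, U.IsSP) (h : SLe K (E ∪ P.seq G ∪ G) G) :
    SLe K (P.star.seq E ∪ G) G := by
  have key : ∀ n, SLe K ((P.pow n).seq G) G := by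
    intro n
    induction n with
    | zero => exact SLe.of_subset (one_langSeq G).subset
    | succ n ih =>
      rintro F hF hK _ ⟨_, ⟨U, hU, V, hV, rfl⟩, W, hW, rfl⟩
      rw [seq_assoc]
      exact h _ (hF.comp (Fc.seqL (pow_isSP hP n U hU) .id))
        (fun W hW => ih F hF hK _ ⟨U, hU, W, hW, rfl⟩) _ (Or.inl (Or.inr ⟨V, hV, W, hW, rfl⟩))
  rintro F hF hK _ (⟨U, hU, V, hV, rfl⟩ | hU)
  · obtain ⟨n, hn⟩ := Set.mem_iUnion.1 hU
    exact h _ (hF.comp (Fc.seqL (pow_isSP hP n U hn) .id))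
        (fun W hW => key n F hF hK _ ⟨U, hn, W, hW, rfl⟩) V (Or.inl (Or.inl hV))
  · exact hK _ hU

theorem SLe.lfpR {E P G : Lang A} (hG : ∀ U ∈ G, U.IsSP) (h : SLe K (E ∪ P.seq G ∪ P) P) :
    SLe K (E.seq G.star ∪ P) P := by
  have key : ∀ n, SLe K (P.seq (G.pow n)) P := by
    intro n
    induction n with
    | zero => exact SLe.of_subset (seq_langOne P).subset
    | succ n ih =>
      rintro F hF hK _ ⟨U, hU, _, ⟨V, hV, W, hW, rfl⟩, rfl⟩
      rw [← seq_assoc]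
      exact ih _ (hF.comp (Fc.seqR (hG W hW) .id))
        (fun X hX => h F hF hK _ (Or.inl (Or.inr ⟨X, hX, W, hW, rfl⟩))) _ ⟨U, hU, V, hV, rfl⟩
  rintro F hF hK _ (⟨U, hU, V, hV, rfl⟩ | hU)
  · obtain ⟨n, hn⟩ := Set.mem_iUnion.1 hV
    exact h _ (hF.comp (Fc.seqR (pow_isSP hG n V hn) .id))
        (fun W hW => key n F hF hK _ ⟨W, hW, V, hn, rfl⟩) U (Or.inl (Or.inl hU))
  · exact hK _ hU

theorem SLe.both_of_eq {L M : Lang A} (h : L = M) : SLe K L M ∧ SLe K M L :=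
  ⟨.of_subset h.subset, .of_subset h.symm.subset⟩

theorem sound {H : HypSet A} (hK : HClosed H K) {e f : Term A} (h : CongH H e f) :
    SLe K e.lang f.lang ∧ SLe K f.lang e.lang := by
  induction h with
  | refl e => exact SLe.both_of_eq rfl
  | symm _ ih => exact ih.symm
  | trans _ _ h1 h2 => exact ⟨h1.1.trans h2.1, h2.2.trans h1.2⟩
  | addCong _ _ h1 h2 => exact ⟨h1.1.union h2.1, h1.2.union h2.2⟩
  | seqCong _ _ h1 h2 =>
    exact ⟨h1.1.seq h2.1 (lang_isSP _) (lang_isSP _), h1.2.seq h2.2 (lang_isSP _) (lang_isSP _)⟩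
  | parCong _ _ h1 h2 =>
    exact ⟨h1.1.par h2.1 (lang_isSP _) (lang_isSP _), h1.2.par h2.2 (lang_isSP _) (lang_isSP _)⟩
  | starCong _ h =>
    exact ⟨h.1.star (lang_isSP _) (lang_isSP _), h.2.star (lang_isSP _) (lang_isSP _)⟩
  | addZero e => exact SLe.both_of_eq (Set.union_empty _)
  | addIdem e => exact SLe.both_of_eq (Set.union_self _)
  | addComm e f => exact SLe.both_of_eq (Set.union_comm _ _)
  | addAssoc e f g => exact SLe.both_of_eq (Set.union_assoc _ _ _).symm
  | seqAssoc e f g => exact SLe.both_of_eq (seq_langAssoc _ _ _)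
  | seqDistL e f g => exact SLe.both_of_eq (seq_langUnion _ _ _)
  | seqDistR e f g => exact SLe.both_of_eq (union_langSeq _ _ _)
  | seqOneR e => exact SLe.both_of_eq (seq_langOne _)
  | seqOneL e => exact SLe.both_of_eq (one_langSeq _)
  | seqZeroR e =>
    refine SLe.both_of_eq (Set.eq_empty_iff_forall_notMem.2 ?_)
    rintro _ ⟨_, _, _, h, _⟩; exact h
  | seqZeroL e =>
    refine SLe.both_of_eq (Set.eq_empty_iff_forall_notMem.2 ?_)
    rintro _ ⟨_, h, _⟩; exact h
  | parComm e f => exact SLe.both_of_eq (par_langComm _ _)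
  | parOne e => exact SLe.both_of_eq (par_langOne _)
  | parZero e =>
    refine SLe.both_of_eq (Set.eq_empty_iff_forall_notMem.2 ?_)
    rintro _ ⟨_, _, _, h, _⟩; exact h
  | parAssoc e f g => exact SLe.both_of_eq (par_langAssoc _ _ _)
  | parDist e f g => exact SLe.both_of_eq (par_langUnion _ _ _)
  | starUnfoldL e =>
    refine SLe.both_of_eq ?_
    show {Pomset.empty A} ∪ e.lang.seq e.lang.star = e.lang.star
    rw [← star_comm, star_unfoldR]
  | starUnfoldR e => exact SLe.both_of_eq (star_unfoldR _)
  | lfpL _ ih => exact ⟨.lfpL (lang_isSP _) ih.1, .of_subset Set.subset_union_right⟩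
  | lfpR _ ih => exact ⟨.lfpR (lang_isSP _) ih.1, .of_subset Set.subset_union_right⟩
  | @hyp e f hef =>
    refine ⟨?_, .of_subset Set.subset_union_right⟩
    rintro F hF h U (hU | hU)
    · exact hK e f hef F hF h U hU
    · exact h U hU

end soundness
end CKAH

namespace CKAH

section substitution
variable {A : Type}

/-- Substitution of a labelled poset for every point. -/
noncomputable def subst (u : LPoset A) (f : u.carrier → LPoset A) : LPoset A where
  carrier := Σₗ x : u.carrier, (f x).carrier
  fin := inferInstanceAs (Fintype (Σ x : u.carrier, (f x).carrier))
  ord := inferInstanceAs (PartialOrder (Σₗ x : u.carrier, (f x).carrier))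
  lab := fun p => (f (ofLex p).1).lab (ofLex p).2

/-- Points of a substitution. -/
def spt {u : LPoset A} (f : u.carrier → LPoset A) (x : u.carrier) (a : (f x).carrier) :
    (subst u f).carrier := toLex (⟨x, a⟩ : Σ x : u.carrier, (f x).carrier)

/-- Case analysis on substitution. -/
def subElim {u : LPoset A} {f : u.carrier → LPoset A} {T : Type*}
    (g : (x : u.carrier) → (f x).carrier → T) (p : (subst u f).carrier) : T :=
  g (ofLex p).1 (ofLex p).2

theorem sub_cases {u : LPoset A} {f : u.carrier → LPoset A} (p : (subst u f).carrier) :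
    ∃ x a, p = spt f x a := ⟨(ofLex p).1, (ofLex p).2, rfl⟩

@[simp] theorem subElim_spt {u : LPoset A} {f : u.carrier → LPoset A} {T : Type*}
    (g : (x : u.carrier) → (f x).carrier → T) (x a) : subElim g (spt f x a) = g x a := rfl

@[simp] theorem lab_spt {u : LPoset A} (f : u.carrier → LPoset A) (x a) :
    (subst u f).lab (spt f x a) = (f x).lab a := rfl

theorem spt_le_def {u : LPoset A} (f : u.carrier → LPoset A) (x a y b) :
    spt f x a ≤ spt f y b ↔ x < y ∨ ∃ h : x = y, h ▸ a ≤ b := by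
  refine Iff.trans (Sigma.Lex.le_def (a := spt f x a) (b := spt f y b)) ?_
  rfl

@[simp] theorem spt_le_same {u : LPoset A} (f : u.carrier → LPoset A) (x a b) :
    spt f x a ≤ spt f x b ↔ a ≤ b := by
  rw [spt_le_def]; simp

theorem spt_le_ne {u : LPoset A} (f : u.carrier → LPoset A) {x y} (h : x ≠ y) (a b) :
    spt f x a ≤ spt f y b ↔ x ≤ y := by
  rw [spt_le_def]; simp [h, lt_iff_le_and_ne]

theorem subst_iso {u v : LPoset A} (e : u.carrier ≃o v.carrier) (f : v.carrier → LPoset A) :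
    (⟦subst u (fun x => f (e x))⟧ : Pomset A) = ⟦subst v f⟧ := by
  refine LPoset.mk_eq (subElim (fun x a => spt f (e x) a)) ?_ ?_ ?_
  · intro p
    obtain ⟨y, b, rfl⟩ := sub_cases p
    obtain ⟨x, rfl⟩ := e.surjective y
    exact ⟨spt _ x b, rfl⟩
  · intro p q
    obtain ⟨x, a, rfl⟩ := sub_cases p
    obtain ⟨y, b, rfl⟩ := sub_cases q
    by_cases h : x = y
    · subst h; simp
    · simp [spt_le_ne _ h, spt_le_ne _ (e.injective.ne h)]
  · intro p
    obtain ⟨x, a, rfl⟩ := sub_cases p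
    rfl

theorem subst_seq (u v : LPoset A) (f : (u.seqL v).carrier → LPoset A) :
    (⟦(subst u (fun x => f (sl v x))).seqL (subst v (fun x => f (sr u x)))⟧ : Pomset A) =
      ⟦subst (u.seqL v) f⟧ := by
  refine LPoset.mk_eq (sElim (subElim (fun x a => spt f (sl v x) a))
    (subElim (fun x a => spt f (sr u x) a))) ?_ ?_ ?_
  · intro p
    obtain ⟨y, b, rfl⟩ := sub_cases p
    obtain ⟨x, rfl⟩ | ⟨x, rfl⟩ := s_cases y
    · exact ⟨sl _ (spt _ x b), rfl⟩
    · exact ⟨sr _ (spt _ x b), rfl⟩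
  · intro p q
    obtain ⟨p, rfl⟩ | ⟨p, rfl⟩ := s_cases p <;> obtain ⟨q, rfl⟩ | ⟨q, rfl⟩ := s_cases q <;>
      obtain ⟨x, a, rfl⟩ := sub_cases p <;> obtain ⟨y, b, rfl⟩ := sub_cases q
    · by_cases h : x = y
      · subst h; simp
      · have h' : sl v x ≠ sl v y := by simpa using h
        simp [spt_le_ne _ h, spt_le_ne _ h']
    · have h' : sl v x ≠ sr u y := fun h => sr_le_sl (u := u) (v := v) y x h.ge
      simp [spt_le_ne _ h']
    · have h' : sr u x ≠ sl v y := fun h => sr_le_sl (u := u) (v := v) x y h.le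
      simp [spt_le_ne _ h']
    · by_cases h : x = y
      · subst h; simp
      · have h' : sr u x ≠ sr u y := by simpa using h
        simp [spt_le_ne _ h, spt_le_ne _ h']
  · intro p
    obtain ⟨p, rfl⟩ | ⟨p, rfl⟩ := s_cases p <;> obtain ⟨x, a, rfl⟩ := sub_cases p <;> rfl

theorem subst_par (u v : LPoset A) (f : (u.parL v).carrier → LPoset A) :
    (⟦(subst u (fun x => f (pl v x))).parL (subst v (fun x => f (pr u x)))⟧ : Pomset A) =
      ⟦subst (u.parL v) f⟧ := by
  refine LPoset.mk_eq (pElim (subElim (fun x a => spt f (pl v x) a))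
    (subElim (fun x a => spt f (pr u x) a))) ?_ ?_ ?_
  · intro p
    obtain ⟨y, b, rfl⟩ := sub_cases p
    obtain ⟨x, rfl⟩ | ⟨x, rfl⟩ := p_cases y
    · exact ⟨pl _ (spt _ x b), rfl⟩
    · exact ⟨pr _ (spt _ x b), rfl⟩
  · intro p q
    obtain ⟨p, rfl⟩ | ⟨p, rfl⟩ := p_cases p <;> obtain ⟨q, rfl⟩ | ⟨q, rfl⟩ := p_cases q <;>
      obtain ⟨x, a, rfl⟩ := sub_cases p <;> obtain ⟨y, b, rfl⟩ := sub_cases q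
    · by_cases h : x = y
      · subst h; simp
      · have h' : pl v x ≠ pl v y := by simpa using h
        simp [spt_le_ne _ h, spt_le_ne _ h']
    · have h' : pl v x ≠ pr u y := fun h => pl_le_pr (u := u) (v := v) x y h.le
      simp [spt_le_ne _ h']
    · have h' : pr u x ≠ pl v y := fun h => pr_le_pl (u := u) (v := v) x y h.le
      simp [spt_le_ne _ h']
    · by_cases h : x = y
      · subst h; simp
      · have h' : pr u x ≠ pr u y := by simpa using h
        simp [spt_le_ne _ h, spt_le_ne _ h']
  · intro p
    obtain ⟨p, rfl⟩ | ⟨p, rfl⟩ := p_cases p <;> obtain ⟨x, a, rfl⟩ := sub_cases p <;> rfl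

theorem subst_single (a : A) (f : (LPoset.singleL a).carrier → LPoset A) :
    (⟦f PUnit.unit⟧ : Pomset A) = ⟦subst (LPoset.singleL a) f⟧ := by
  refine LPoset.mk_eq (fun x => spt f PUnit.unit x) ?_ ?_ ?_
  · intro p
    obtain ⟨y, b, rfl⟩ := sub_cases p
    exact ⟨b, rfl⟩
  · intro p q; exact spt_le_same f _ p q
  · intro p; rfl

theorem subst_emptyL (f : (LPoset.emptyL A).carrier → LPoset A) :
    (⟦subst (LPoset.emptyL A) f⟧ : Pomset A) = Pomset.empty A := by
  refine LPoset.mk_eq (v := LPoset.emptyL A) (subElim (fun x _ => x)) ?_ ?_ ?_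
  · intro p; exact p.elim0
  · intro p; obtain ⟨y, b, rfl⟩ := sub_cases p; exact y.elim0
  · intro p; obtain ⟨y, b, rfl⟩ := sub_cases p; exact y.elim0

variable {r : A → Term A}

/-- Semantic description of `rMap`. -/
def SubR (r : A → Term A) (U W : Pomset A) : Prop :=
  ∃ u : LPoset A, (⟦u⟧ : Pomset A) = U ∧ ∃ f : u.carrier → LPoset A,
    (∀ x, (⟦f x⟧ : Pomset A) ∈ (r (u.lab x)).lang) ∧ (⟦subst u f⟧ : Pomset A) = W

theorem SubR.rep {u : LPoset A} {W : Pomset A} (h : SubR r (⟦u⟧ : Pomset A) W) :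
    ∃ f : u.carrier → LPoset A,
    (∀ x, (⟦f x⟧ : Pomset A) ∈ (r (u.lab x)).lang) ∧ (⟦subst u f⟧ : Pomset A) = W := by
  obtain ⟨v, hv, f, hf, rfl⟩ := h
  obtain ⟨e, he⟩ : LPoset.Iso u v := Quotient.exact hv.symm
  refine ⟨fun x => f (e x), fun x => ?_, subst_iso e f⟩
  rw [← he x]; exact hf _

theorem subR_seq {U V W : Pomset A} :
    SubR r (U.seq V) W ↔ ∃ U' V', SubR r U U' ∧ SubR r V V' ∧ W = U'.seq V' := by
  constructor
  · induction U using Quotient.inductionOn with | _ u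
    induction V using Quotient.inductionOn with | _ v
    intro h
    obtain ⟨f, hf, rfl⟩ := SubR.rep (u := u.seqL v) h
    exact ⟨_, _, ⟨u, rfl, fun x => f (sl v x), fun x => hf (sl v x), rfl⟩,
      ⟨v, rfl, fun x => f (sr u x), fun x => hf (sr u x), rfl⟩, (subst_seq u v f).symm⟩
  · rintro ⟨_, _, ⟨u, rfl, f, hf, rfl⟩, ⟨v, rfl, g, hg, rfl⟩, rfl⟩
    refine ⟨u.seqL v, rfl, sElim f g, fun x => ?_, (subst_seq u v (sElim f g)).symm⟩
    obtain ⟨x, rfl⟩ | ⟨x, rfl⟩ := s_cases x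
    · exact hf x
    · exact hg x

theorem subR_par {U V W : Pomset A} :
    SubR r (U.par V) W ↔ ∃ U' V', SubR r U U' ∧ SubR r V V' ∧ W = U'.par V' := by
  constructor
  · induction U using Quotient.inductionOn with | _ u
    induction V using Quotient.inductionOn with | _ v
    intro h
    obtain ⟨f, hf, rfl⟩ := SubR.rep (u := u.parL v) h
    exact ⟨_, _, ⟨u, rfl, fun x => f (pl v x), fun x => hf (pl v x), rfl⟩,
      ⟨v, rfl, fun x => f (pr u x), fun x => hf (pr u x), rfl⟩, (subst_par u v f).symm⟩
  · rintro ⟨_, _, ⟨u, rfl, f, hf, rfl⟩, ⟨v, rfl, g, hg, rfl⟩, rfl⟩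
    refine ⟨u.parL v, rfl, pElim f g, fun x => ?_, (subst_par u v (pElim f g)).symm⟩
    obtain ⟨x, rfl⟩ | ⟨x, rfl⟩ := p_cases x
    · exact hf x
    · exact hg x

theorem subR_single {a : A} {W : Pomset A} :
    SubR r (Pomset.single a) W ↔ W ∈ (r a).lang := by
  constructor
  · intro h
    obtain ⟨f, hf, rfl⟩ := SubR.rep (u := LPoset.singleL a) h
    have := hf PUnit.unit
    rw [subst_single a f] at this
    exact this
  · induction W using Quotient.inductionOn with | _ w
    intro h
    exact ⟨LPoset.singleL a, rfl, fun _ => w, fun _ => h, (subst_single a (fun _ => w)).symm⟩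

theorem subR_empty {W : Pomset A} :
    SubR r (Pomset.empty A) W ↔ W = Pomset.empty A := by
  constructor
  · intro h
    obtain ⟨f, hf, rfl⟩ := SubR.rep (u := LPoset.emptyL A) h
    exact subst_emptyL f
  · rintro rfl
    exact ⟨LPoset.emptyL A, rfl, fun x => x.elim0, fun x => x.elim0, subst_emptyL _⟩

theorem rMap.subR {U W : Pomset A} (h : rMap r U W) : SubR r U W := by
  induction h with
  | one => exact subR_empty.2 rfl
  | var a h => exact subR_single.2 h
  | seq _ _ h1 h2 => exact subR_seq.2 ⟨_, _, h1, h2, rfl⟩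
  | par _ _ h1 h2 => exact subR_par.2 ⟨_, _, h1, h2, rfl⟩

theorem SubR.rMap {U : Pomset A} (hU : U.IsSP) : ∀ {W}, SubR r U W → rMap r U W := by
  induction hU with
  | empty => intro W h; rw [subR_empty.1 h]; exact .one
  | single a => intro W h; exact .var a (subR_single.1 h)
  | seq _ _ h1 h2 =>
    intro W h
    obtain ⟨U', V', hu, hv, rfl⟩ := subR_seq.1 h
    exact .seq (h1 hu) (h2 hv)
  | par _ _ h1 h2 =>
    intro W h
    obtain ⟨U', V', hu, hv, rfl⟩ := subR_par.1 h
    exact .par (h1 hu) (h2 hv)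

theorem rMap.inv_seq {U V W : Pomset A} (hU : U.IsSP) (hV : V.IsSP) (h : rMap r (U.seq V) W) :
    ∃ U' V', rMap r U U' ∧ rMap r V V' ∧ W = U'.seq V' := by
  obtain ⟨U', V', h1, h2, h3⟩ := subR_seq.1 h.subR
  exact ⟨U', V', h1.rMap hU, h2.rMap hV, h3⟩

theorem rMap.inv_par {U V W : Pomset A} (hU : U.IsSP) (hV : V.IsSP) (h : rMap r (U.par V) W) :
    ∃ U' V', rMap r U U' ∧ rMap r V V' ∧ W = U'.par V' := by
  obtain ⟨U', V', h1, h2, h3⟩ := subR_par.1 h.subR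
  exact ⟨U', V', h1.rMap hU, h2.rMap hV, h3⟩

theorem rMap.isSP {U W : Pomset A} (h : rMap r U W) : W.IsSP := by
  induction h with
  | one => exact .empty
  | var a h => exact lang_isSP _ _ h
  | seq _ _ h1 h2 => exact h1.seq h2
  | par _ _ h1 h2 => exact h1.par h2

theorem rMap_lang (e : Term A) : ∀ {U W : Pomset A}, U ∈ e.lang → rMap r U W →
    W ∈ (rTerm r e).lang := by
  induction e with
  | zero => intro U W hU; exact hU.elim
  | one => rintro U W rfl h; exact subR_empty.1 h.subR
  | var a => rintro U W rfl h; exact subR_single.1 h.subR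
  | add e f he hf =>
    rintro U W (h | h) h'
    · exact Or.inl (he h h')
    · exact Or.inr (hf h h')
  | seq e f he hf =>
    rintro U W ⟨U1, h1, U2, h2, rfl⟩ h
    obtain ⟨V1, V2, hv1, hv2, rfl⟩ := h.inv_seq (lang_isSP _ _ h1) (lang_isSP _ _ h2)
    exact ⟨V1, he h1 hv1, V2, hf h2 hv2, rfl⟩
  | par e f he hf =>
    rintro U W ⟨U1, h1, U2, h2, rfl⟩ h
    obtain ⟨V1, V2, hv1, hv2, rfl⟩ := h.inv_par (lang_isSP _ _ h1) (lang_isSP _ _ h2)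
    exact ⟨V1, he h1 hv1, V2, hf h2 hv2, rfl⟩
  | star e he =>
    intro U W hU h
    obtain ⟨n, hn⟩ := Set.mem_iUnion.1 hU
    refine Set.mem_iUnion.2 ⟨n, ?_⟩
    clear hU
    induction n generalizing U W with
    | zero => 
      have hn : U = Pomset.empty A := hn
      subst hn
      exact subR_empty.1 h.subR
    | succ n ih =>
      obtain ⟨U1, h1, U2, h2, rfl⟩ := hn
      obtain ⟨V1, V2, hv1, hv2, rfl⟩ := h.inv_seq
        (lang_isSP (.star e) _ (Set.mem_iUnion.2 ⟨n, h1⟩)) (lang_isSP _ _ h2)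
      exact ⟨V1, ih hv1 h1, V2, he h2 hv2, rfl⟩

theorem lang_rMap (e : Term A) : ∀ {W : Pomset A}, W ∈ (rTerm r e).lang →
    ∃ U ∈ e.lang, rMap r U W := by
  induction e with
  | zero => intro W hW; exact hW.elim
  | one => rintro W rfl; exact ⟨_, rfl, .one⟩
  | var a => intro W h; exact ⟨_, rfl, .var a h⟩
  | add e f he hf =>
    rintro W (h | h)
    · obtain ⟨U, hU, h⟩ := he h
      exact ⟨U, Or.inl hU, h⟩
    · obtain ⟨U, hU, h⟩ := hf h
      exact ⟨U, Or.inr hU, h⟩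
  | seq e f he hf =>
    rintro W ⟨W1, h1, W2, h2, rfl⟩
    obtain ⟨U1, hU1, h1⟩ := he h1
    obtain ⟨U2, hU2, h2⟩ := hf h2
    exact ⟨_, ⟨U1, hU1, U2, hU2, rfl⟩, h1.seq h2⟩
  | par e f he hf =>
    rintro W ⟨W1, h1, W2, h2, rfl⟩
    obtain ⟨U1, hU1, h1⟩ := he h1
    obtain ⟨U2, hU2, h2⟩ := hf h2
    exact ⟨_, ⟨U1, hU1, U2, hU2, rfl⟩, h1.par h2⟩
  | star e he =>
    intro W hW
    obtain ⟨n, hn⟩ := Set.mem_iUnion.1 hW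
    suffices h : ∃ U ∈ e.lang.pow n, rMap r U W by
      obtain ⟨U, hU, h⟩ := h
      exact ⟨U, Set.mem_iUnion.2 ⟨n, hU⟩, h⟩
    clear hW
    induction n generalizing W with
    | zero => 
      have hn : W = Pomset.empty A := hn
      subst hn
      exact ⟨_, rfl, .one⟩
    | succ n ih =>
      obtain ⟨W1, h1, W2, h2, rfl⟩ := hn
      obtain ⟨U1, hU1, h1⟩ := ih h1
      obtain ⟨U2, hU2, h2⟩ := he h2
      exact ⟨_, ⟨U1, hU1, U2, hU2, rfl⟩, h1.seq h2⟩

theorem Fc.rMap_inv {F : Pomset A → Pomset A} (hF : Fc F) {X : Pomset A} (hX : X.IsSP) :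
    ∀ {W}, rMap r (F X) W → ∃ G, Fc G ∧ ∃ X', rMap r X X' ∧ W = G X' ∧
      ∀ Y Y', rMap r Y Y' → rMap r (F Y) (G Y') := by
  induction hF with
  | id => intro W h; exact ⟨_, .id, W, h, rfl, fun _ _ h => h⟩
  | seqL hU hF ih =>
    intro W h
    obtain ⟨U', V', h1, h2, rfl⟩ := rMap.inv_seq hU (hF.isSP hX) h
    obtain ⟨G, hG, X', hX', rfl, hh⟩ := ih h2
    exact ⟨_, hG.seqL h1.isSP, X', hX', rfl, fun Y Y' hY => h1.seq (hh Y Y' hY)⟩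
  | seqR hU hF ih =>
    intro W h
    obtain ⟨V', U', h2, h1, rfl⟩ := rMap.inv_seq (hF.isSP hX) hU h
    obtain ⟨G, hG, X', hX', rfl, hh⟩ := ih h2
    exact ⟨_, hG.seqR h1.isSP, X', hX', rfl, fun Y Y' hY => (hh Y Y' hY).seq h1⟩
  | par hU hF ih =>
    intro W h
    obtain ⟨U', V', h1, h2, rfl⟩ := rMap.inv_par hU (hF.isSP hX) h
    obtain ⟨G, hG, X', hX', rfl, hh⟩ := ih h2
    exact ⟨_, hG.par h1.isSP, X', hX', rfl, fun Y Y' hY => h1.par (hh Y Y' hY)⟩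

theorem main_aux {Γ : Set A} {H H' : HypSet A} (hr : IsReification Γ H H' r) (L : Lang A)
    {U : Pomset A} (hU : closure H L U) : ∀ W, rMap r U W → W ∈ cl H' (rImg r L) := by
  induction hU with
  | base h => intro W hW; exact closure.base ⟨_, h, hW⟩
  | @step e f hef C hC hf U hU ih =>
    intro W hW
    obtain ⟨F, hF, hCF⟩ := exists_Fc hC
    rw [hCF] at hW
    obtain ⟨G, hG, U', hU', rfl, hh⟩ := hF.rMap_inv (lang_isSP _ _ hU) hW
    refine (sound (cl_HClosed H' (rImg r L)) (hr.hyps (e, f) hef)).1 G hG ?_ U'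
      (Or.inl (rMap_lang e hU hU'))
    intro V hV
    obtain ⟨V0, hV0, h⟩ := lang_rMap f hV
    exact ih V0 hV0 _ (by rw [hCF]; exact hh _ _ h)

end substitution
end CKAH

namespace CKAH

/-- If `r` is a reification from `H` to `H'` and `L ⊆ SP(Σ)`, then
`r(cl_H(L)) ⊆ cl_{H'}(r(L))`. -/
theorem reification_closure (A : Type) (Γ : Set A) (H H' : HypSet A)
    (r : A → Term A) (hr : IsReification Γ H H' r)
    (L : Lang A) (hL : L ⊆ SPset A) :
    rImg r (cl H L) ⊆ cl H' (rImg r L) := by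
  rintro W ⟨U, hU, h⟩
  exact main_aux hr L hU W h

end CKAH
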